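/- arXiv:1812.11313 — 3 statements merged into one kernel-verified Lean document; each statement's English description precedes it below -/
import Mathlib

section
/- Let p be an odd prime and 𝒜 an S-ring over a cyclic p-group G. Then 𝒜 is schurian, and one of the following holds: (1) |rad(𝒜)| = 1 and rk(𝒜) = 2; (2) |rad(𝒜)| = 1, 𝒜 is normal, and 𝒜 = cyc(K,G) for some subgroup K of the unique subgroup K₀ of Aut(G) of order p−1; (3) |rad(𝒜)| > 1 and 𝒜 is a proper S-wreath product for some 𝒜-section S. -/
/-!
By Schur's theorem on multipliers (`cls_aut`), the automorphisms of the cyclic group `G` permute the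
basic sets of `A`. Let `Φ = G ^ p` be the maximal subgroup of `G`, let `H` be the largest proper
`A`-subgroup, let `X` be a highest basic set and let `L` be its radical, an `A`-subgroup contained
in `H`. Every basic set outside `H` is an image of `X` under `Aut(G)`, so it has radical `L` too.

If `H ≠ Φ`, then `L = H` and `X = G \ H` (`Rad_eq_of_ne_Phi`, `cls_eq_compl`): `X` contains elements
of different orders, so its stabilizer in `Aut(G)` has elements fixing one of them and moving
another, which forces `X` to contain large cosets; a double count of `X X⁻¹` finishes the argument.

If `H = Φ`, let `M ≤ Aut(G)` be the stabilizer of `X`. The basic sets outside `Φ` are `M`-orbits, and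
modulo `L` all basic sets are `M`-orbits (`cls_mod_Rad`). If `L = 1`, then `M` acts faithfully on
`G / Φ`, so `|M|` divides `p - 1` and `A = cyc(M, G)`. In that case an automorphism of `A` induces on
`G / Φ` a map preserving differences up to `|M|`-th roots of unity. If `|M| < p - 1`, a polynomial
argument shows that this map is affine (`affine_of_pow_sub`); if `|M| = p - 1` and `|G| > p`, a product
over a transversal of `Φ` shows the same (`IsAuto.large`). An automorphism of `A` which is affine on
`G / Φ` is affine on `G` (`IsAuto.affine`), so `A` is normal. If `|M| = p - 1` and `|G| = p`, the rank
is `2`.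

The trichotomy follows: `L ≠ 1` gives a proper wreath product for the section `H / L`, and `L = 1`
gives rank `2` or the normal cyclotomic case.

Schurity is proved by induction on `|G|`: a group of permutations of `H` realizing the restriction
of `A` is extended to `G` by letting it act on the cosets of `H` independently, and in the case
`H = Φ` the extension is intersected with the group of permutations that are affine modulo `L`
with linear part in `M` (`schurWitness_compl`, `schurWitness_Phi`).
-/

open scoped Pointwise

namespace SRingPaper

/-- The number of representations of `z` as `x * y` with `x ∈ X`, `y ∈ Y`
(the structure constant `c^Z_{X,Y}` evaluated at `z ∈ Z`). -/
noncomputable def structConst {G : Type*} [Group G] (X Y : Set G) (z : G) : ℕ :=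
  Nat.card {p : G × G // p.1 ∈ X ∧ p.2 ∈ Y ∧ p.1 * p.2 = z}

/-- An S-ring (Schur ring) over a finite group `G`, given by its partition of `G`
into basic sets: the partition contains `{1}`, is closed under taking inverses,
and the structure constants are constant on each class (equivalently, the
ℤ-span of the indicator elements of the classes is a subring of ℤG). -/
structure SRing (G : Type*) [Group G] [Finite G] where
  parts : Set (Set G)
  nonempty_mem : ∀ X ∈ parts, X.Nonempty
  exists_mem : ∀ g : G, ∃ X ∈ parts, g ∈ X
  eq_of_mem : ∀ X ∈ parts, ∀ Y ∈ parts, ∀ g : G, g ∈ X → g ∈ Y → X = Y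
  one_mem : ({1} : Set G) ∈ parts
  inv_mem : ∀ X ∈ parts, X⁻¹ ∈ parts
  structConst_const : ∀ X ∈ parts, ∀ Y ∈ parts, ∀ Z ∈ parts, ∀ z ∈ Z, ∀ z' ∈ Z,
    structConst X Y z = structConst X Y z'

/-- `R(X) = {(g, x*g) : x ∈ X, g ∈ G}`, the edge set of the Cayley graph `Cay(G,X)`. -/
def RSet {G : Type*} [Group G] (X : Set G) : Set (G × G) :=
  {p | ∃ x ∈ X, p.2 = x * p.1}

/-- The image of a binary relation under a map applied to both coordinates. -/
def mapRel {G G' : Type*} (f : G → G') (R : Set (G × G)) : Set (G' × G') :=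
  (fun p : G × G => (f p.1, f p.2)) '' R

section Defs

variable {G G' : Type*} [Group G] [Finite G] [Group G'] [Finite G']

/-- A combinatorial isomorphism from the S-ring `A` to the S-ring `B`. -/
structure IsIso (A : SRing G) (B : SRing G') (f : G → G') : Prop where
  bijective : Function.Bijective f
  image_eq : (fun X : Set G => mapRel f (RSet X)) '' A.parts = RSet '' B.parts

/-- An algebraic isomorphism from the S-ring `A` to the S-ring `B`:
a bijection between the basic sets preserving all structure constants. -/
structure IsAlgIso (A : SRing G) (B : SRing G') (φ : Set G → Set G') : Prop where
  bijOn : Set.BijOn φ A.parts B.parts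
  structConst_eq : ∀ X ∈ A.parts, ∀ Y ∈ A.parts, ∀ Z ∈ A.parts,
    ∀ z ∈ Z, ∀ z' ∈ φ Z, structConst X Y z = structConst (φ X) (φ Y) z'

/-- The algebraic isomorphism `φ` is induced by the combinatorial isomorphism `f`
(i.e. `φ = φ_f`). -/
def InducedBy (A : SRing G) (φ : Set G → Set G') (f : G → G') : Prop :=
  Function.Bijective f ∧ ∀ X ∈ A.parts, mapRel f (RSet X) = RSet (φ X)

/-- `A` is separable with respect to the class `𝒦_A` of finite abelian groups. -/
def SepAbelian (A : SRing G) : Prop :=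
  ∀ (H : Type*) [CommGroup H] [Finite H] (B : SRing H) (φ : Set G → Set H),
    IsAlgIso A B φ → ∃ f : G → H, InducedBy A φ f

/-- `A` is separable with respect to the class `𝒦_C` of finite cyclic groups. -/
def SepCyclic (A : SRing G) : Prop :=
  ∀ (H : Type*) [Group H] [Finite H], IsCyclic H → ∀ (B : SRing H) (φ : Set G → Set H),
    IsAlgIso A B φ → ∃ f : G → H, InducedBy A φ f

/-- `A` is schurian: `A = V(K, G)` for some group `K` with `G_right ≤ K ≤ Sym(G)`,
i.e. the basic sets of `A` are the orbits on `G` of the stabilizer of `1` in `K`. -/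
def IsSchurian (A : SRing G) : Prop :=
  ∃ K : Subgroup (Equiv.Perm G),
    (∀ g : G, Equiv.mulRight g ∈ K) ∧
    A.parts = {X : Set G | ∃ g : G, X = {h : G | ∃ f ∈ K, f 1 = 1 ∧ f g = h}}

lemma mapRel_comp {A B C : Type*} (f : B → C) (g : A → B) (R : Set (A × A)) :
    mapRel (f ∘ g) R = mapRel f (mapRel g R) := by
  simp only [mapRel, Set.image_image]
  rfl

lemma mapRel_id {A : Type*} (R : Set (A × A)) : mapRel (fun x => x) R = R := by
  simp [mapRel]

/-- The automorphism group `Aut(A)` of an S-ring, as a subgroup of `Sym(G)`. -/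
def autSubgroup (A : SRing G) : Subgroup (Equiv.Perm G) where
  carrier := {f : Equiv.Perm G | ∀ X ∈ A.parts, mapRel f (RSet X) = RSet X}
  one_mem' := by
    intro X hX
    have h : ⇑(1 : Equiv.Perm G) = fun x => x := rfl
    rw [h, mapRel_id]
  mul_mem' := by
    intro f g hf hg X hX
    have h : ⇑(f * g) = ⇑f ∘ ⇑g := rfl
    rw [h, mapRel_comp, hg X hX, hf X hX]
  inv_mem' := by
    intro f hf X hX
    conv_lhs => rw [← hf X hX]
    rw [← mapRel_comp]
    have h : ⇑f⁻¹ ∘ ⇑f = fun x => x := by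
      funext x
      simp
    rw [h, mapRel_id]

/-- `A` is a normal S-ring: `G_right` is normal in `Aut(A)`. -/
def IsNormalSRing (A : SRing G) : Prop :=
  ∀ f ∈ autSubgroup A, ∀ g : G,
    ∃ g' : G, f * (Equiv.mulRight g : Equiv.Perm G) * f⁻¹ = Equiv.mulRight g'

/-- The partition of `G` into the orbits of `K ≤ Aut(G)`: the basic sets of the
cyclotomic S-ring `cyc(K, G)`. -/
def cycParts (K : Subgroup (MulAut G)) : Set (Set G) :=
  {X : Set G | ∃ g : G, X = {h : G | ∃ f ∈ K, f g = h}}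

/-- `H` is an `A`-subgroup: `H` is a union of basic sets of `A`. -/
def IsASubgroup (A : SRing G) (H : Subgroup G) : Prop :=
  ∀ X ∈ A.parts, X ⊆ (H : Set G) ∨ Disjoint X (H : Set G)

/-- `rad(X) = {g ∈ G : gX = Xg = X}`. -/
def radSet (X : Set G) : Set G :=
  {g : G | (fun x => g * x) '' X = X ∧ (fun x => x * g) '' X = X}

/-- A subset of a cyclic group is highest if it contains a generator. -/
def IsHighest (X : Set G) : Prop :=
  ∃ x ∈ X, ∀ g : G, g ∈ Subgroup.zpowers x

/-- `A` is the `S`-wreath product with respect to the section `S = U/L`: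
`U` and `L` are `A`-subgroups, `L ≤ U`, `L` is normal in `G`, and every basic
set outside `U` has `L` in its radical. -/
def IsSWreath (A : SRing G) (U L : Subgroup G) : Prop :=
  IsASubgroup A U ∧ IsASubgroup A L ∧ L ≤ U ∧ L.Normal ∧
    ∀ X ∈ A.parts, ¬ X ⊆ (U : Set G) → (L : Set G) ⊆ radSet X

/-- `AU` is the restriction `A_U` of `A` to the `A`-subgroup `U`. -/
def IsRestriction (A : SRing G) (U : Subgroup G) (AU : SRing ↥U) : Prop :=
  AU.parts = {Y : Set ↥U | ∃ X ∈ A.parts, X ⊆ (U : Set G) ∧ Y = (Subtype.val ⁻¹' X : Set ↥U)}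

/-- `AQ` is the quotient S-ring `A_{G/L}`. -/
def IsQuotientSRing (A : SRing G) (L : Subgroup G) [L.Normal] (AQ : SRing (G ⧸ L)) : Prop :=
  AQ.parts = {Y : Set (G ⧸ L) | ∃ X ∈ A.parts, Y = ((QuotientGroup.mk : G → G ⧸ L) '' X)}

/-- The orbit of a pair under a permutation group, for the definition of 2-equivalence. -/
def orb2 {Ω : Type*} (K : Subgroup (Equiv.Perm Ω)) (p : Ω × Ω) : Set (Ω × Ω) :=
  {q : Ω × Ω | ∃ f ∈ K, (f p.1, f p.2) = q}

/-- Two permutation groups are 2-equivalent if they have the same orbits on `Ω × Ω`. -/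
def TwoEquiv {Ω : Type*} (K K' : Subgroup (Equiv.Perm Ω)) : Prop :=
  {S : Set (Ω × Ω) | ∃ p, S = orb2 K p} = {S : Set (Ω × Ω) | ∃ p, S = orb2 K' p}

/-- A permutation group is 2-isolated if it is the only group 2-equivalent to it. -/
def TwoIsolated {Ω : Type*} (K : Subgroup (Equiv.Perm Ω)) : Prop :=
  ∀ K' : Subgroup (Equiv.Perm Ω), TwoEquiv K K' → K' = K

end Defs

/-- `Aut(A)^S` for the section `S = G/N`: the permutations of `G/N` induced by
automorphisms of `A` permuting the `N`-cosets. -/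
def inducedOnQuotient {G : Type*} [Group G] [Finite G] (A : SRing G) (N : Subgroup G)
    [N.Normal] : Set ((G ⧸ N) → (G ⧸ N)) :=
  {q : (G ⧸ N) → (G ⧸ N) | ∃ f : Equiv.Perm G, f ∈ autSubgroup A ∧
    (∀ u v : G, (u : G ⧸ N) = (v : G ⧸ N) → ((f u : G) : G ⧸ N) = ((f v : G) : G ⧸ N)) ∧
    ∀ u : G, q (u : G ⧸ N) = ((f u : G) : G ⧸ N)}

end SRingPaper

set_option linter.unusedSectionVars false

namespace SRingPaper

/-! ### Basic sets, closed sets and radicals -/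

section Basic

variable {G : Type*} [CommGroup G] [Finite G] (A : SRing G)

/-- The basic set of `A` containing `g`. -/
noncomputable def cls (g : G) : Set G := (A.exists_mem g).choose

lemma cls_mem_parts (g : G) : cls A g ∈ A.parts := (A.exists_mem g).choose_spec.1

lemma mem_cls (g : G) : g ∈ cls A g := (A.exists_mem g).choose_spec.2

variable {A}

lemma cls_eq_of_mem {X : Set G} (hX : X ∈ A.parts) {g : G} (hg : g ∈ X) : cls A g = X :=
  A.eq_of_mem _ (cls_mem_parts A g) _ hX g (mem_cls A g) hg

lemma cls_eq {g h : G} (hh : h ∈ cls A g) : cls A h = cls A g :=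
  cls_eq_of_mem (cls_mem_parts A g) hh

variable (A)

lemma cls_one : cls A 1 = {1} := cls_eq_of_mem A.one_mem rfl

lemma cls_inv (g : G) : cls A g⁻¹ = (cls A g)⁻¹ :=
  cls_eq_of_mem (A.inv_mem _ (cls_mem_parts A g)) (by simpa using mem_cls A g)

lemma parts_eq : A.parts = Set.range (cls A) := by
  ext X
  constructor
  · intro hX
    obtain ⟨g, hg⟩ := A.nonempty_mem X hX
    exact ⟨g, cls_eq_of_mem hX hg⟩
  · rintro ⟨g, rfl⟩
    exact cls_mem_parts A g

/-- A set is `A`-closed when it is a union of basic sets of `A`. -/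
def AClosed (S : Set G) : Prop := ∀ g ∈ S, cls A g ⊆ S

/-- A function on `G` is a class function when it is constant on the basic sets of `A`. -/
def ClassFun {R : Type*} (f : G → R) : Prop := ∀ g, ∀ h ∈ cls A g, f h = f g

variable {A}

lemma isASubgroup_of_closed {H : Subgroup G} (h : AClosed A (H : Set G)) : IsASubgroup A H := by
  intro X hX
  by_cases hd : ∃ g ∈ X, g ∈ H
  · obtain ⟨g, hg, hgH⟩ := hd
    left
    rw [← cls_eq_of_mem hX hg]
    exact h g hgH
  · right
    rw [Set.disjoint_left]
    exact fun g hg hgH => hd ⟨g, hg, hgH⟩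

lemma AClosed.compl {S : Set G} (h : AClosed A S) : AClosed A Sᶜ := by
  intro g hg k hk hkS
  apply hg
  have := h k hkS
  rw [cls_eq hk] at this
  exact this (mem_cls A g)

lemma closed_cls (g : G) : AClosed A (cls A g) := fun _ hh => (cls_eq hh).le

lemma AClosed.inv {S : Set G} (h : AClosed A S) : AClosed A S⁻¹ := by
  intro g hg
  have := h g⁻¹ hg
  rw [cls_inv] at this
  exact Set.inv_subset.mp this

lemma AClosed.mem_iff {S : Set G} (hS : AClosed A S) {g h : G} (hh : h ∈ cls A g) :
    h ∈ S ↔ g ∈ S :=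
  ⟨fun H => (hS h H) (cls_eq hh ▸ mem_cls A g), fun H => hS g H hh⟩

open Classical in
/-- Class functions are closed under convolution: this is the ring property of `A`. -/
lemma ClassFun.conv {R : Type*} [CommSemiring R] [Fintype G] {f g : G → R}
    (hf : ClassFun A f) (hg : ClassFun A g) :
    ClassFun A (fun z => ∑ x, f x * g (x⁻¹ * z)) := by
  intro z zz hz
  -- the value of a class function on a basic set
  let v : (G → R) → Set G → R := fun f X => if h : X.Nonempty then f h.some else 0
  have hv : ∀ f, ClassFun A f → ∀ x, f x = v f (cls A x) := by
    intro f hf x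
    have hne : (cls A x).Nonempty := ⟨x, mem_cls A x⟩
    simp only [v, dif_pos hne]
    exact (hf x _ hne.some_mem).symm
  have key : ∀ z, ∑ x, f x * g (x⁻¹ * z) =
      ∑ b : Set G × Set G, (structConst b.1 b.2 z *
        if b.1 ∈ A.parts ∧ b.2 ∈ A.parts then v f b.1 * v g b.2 else 0) := by
    intro z
    rw [← Finset.sum_fiberwise (s := Finset.univ)
      (g := fun x : G => ((cls A x, cls A (x⁻¹ * z)) : Set G × Set G))]
    refine Finset.sum_congr rfl fun b _ => ?_
    by_cases hb : b.1 ∈ A.parts ∧ b.2 ∈ A.parts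
    · rw [if_pos hb]
      have h1 : ∀ x ∈ Finset.univ.filter (fun x : G => (cls A x, cls A (x⁻¹ * z)) = b),
          f x * g (x⁻¹ * z) = v f b.1 * v g b.2 := by
        intro x hx
        rw [Finset.mem_filter] at hx
        rw [hv f hf, hv g hg, ← hx.2]
      rw [Finset.sum_congr rfl h1, Finset.sum_const, nsmul_eq_mul]
      congr 2
      rw [structConst, ← Fintype.card_subtype, ← Nat.card_eq_fintype_card]
      refine Nat.card_congr
        { toFun := fun x => ⟨(x.1, x.1⁻¹ * z), ?_, ?_, by simp⟩
          invFun := fun q => ⟨q.1.1, ?_⟩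
          left_inv := fun x => rfl
          right_inv := fun q => ?_ }
      · have := congrArg Prod.fst x.2
        exact this ▸ mem_cls A _
      · have := congrArg Prod.snd x.2
        exact this ▸ mem_cls A _
      · obtain ⟨⟨a, c⟩, h1, h2, h3⟩ := q
        have : a⁻¹ * z = c := by rw [← h3]; simp
        rw [this, cls_eq_of_mem hb.1 h1, cls_eq_of_mem hb.2 h2]
      · obtain ⟨⟨a, c⟩, h1, h2, h3⟩ := q
        simp only [Subtype.mk.injEq, Prod.mk.injEq, true_and]
        rw [← h3]; simp
    · rw [if_neg hb, mul_zero]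
      apply Finset.sum_eq_zero
      intro x hx
      rw [Finset.mem_filter] at hx
      exact absurd (by rw [← hx.2]; exact ⟨cls_mem_parts A _, cls_mem_parts A _⟩) hb
  simp only [key]
  refine Finset.sum_congr rfl fun b _ => ?_
  by_cases hb : b.1 ∈ A.parts ∧ b.2 ∈ A.parts
  · rw [A.structConst_const _ hb.1 _ hb.2 _ (cls_mem_parts A z) zz hz z (mem_cls A z)]
  · simp [if_neg hb]

open Classical in
/-- For `A`-closed sets `S`, `T`, the number of `x ∈ S` with `x⁻¹ z ∈ T` depends only on the basic
set of `z`. -/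
lemma classFun_count [Fintype G] {S T : Set G} (hS : AClosed A S) (hT : AClosed A T) :
    ClassFun A (fun z => (Finset.univ.filter (fun x => x ∈ S ∧ x⁻¹ * z ∈ T)).card) := by
  have h1 : ClassFun A (fun x => if x ∈ S then (1 : ℕ) else 0) := by
    intro g h hh
    simp only [hS.mem_iff hh]
  have h2 : ClassFun A (fun x => if x ∈ T then (1 : ℕ) else 0) := by
    intro g h hh
    simp only [hT.mem_iff hh]
  have h3 := h1.conv h2
  intro g h hh
  have h4 := h3 g h hh
  simp only [Finset.card_filter]
  convert h4 using 2 <;> split_ifs <;> simp_all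

lemma AClosed.mul {S T : Set G} (hS : AClosed A S) (hT : AClosed A T) : AClosed A (S * T) := by
  classical
  have := Fintype.ofFinite G
  rintro _ ⟨s, hs, t, ht, rfl⟩ h hh
  have h1 := classFun_count hS hT (s * t) h hh
  simp only at h1
  have h2 : 0 < (Finset.univ.filter (fun x => x ∈ S ∧ x⁻¹ * (s * t) ∈ T)).card :=
    Finset.card_pos.mpr ⟨s, by simp [hs, ht]⟩
  rw [← h1] at h2
  obtain ⟨x, hx⟩ := Finset.card_pos.mp h2
  rw [Finset.mem_filter] at hx
  exact ⟨x, hx.2.1, x⁻¹ * h, hx.2.2, by simp⟩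

lemma cls_mul_subset (g h : G) : cls A (g * h) ⊆ cls A g * cls A h :=
  ((closed_cls g).mul (closed_cls h)) _ (Set.mul_mem_mul (mem_cls A g) (mem_cls A h))

lemma closed_closure {S : Set G} (hS : AClosed A S) :
    AClosed A (Subgroup.closure S : Set G) := by
  intro g hg
  induction hg using Subgroup.closure_induction with
  | mem x hx => exact (hS x hx).trans Subgroup.subset_closure
  | one => rw [cls_one]; simp
  | mul x y _ _ h1 h2 =>
    refine (cls_mul_subset x y).trans ?_
    rintro _ ⟨a, ha, b, hb, rfl⟩
    exact mul_mem (h1 ha) (h2 hb)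
  | inv x _ h1 =>
    rw [cls_inv]
    intro a ha
    simpa using h1 ha

/-- The radical of a set, as a subgroup. -/
def Rad (X : Set G) : Subgroup G := MulAction.stabilizer G X

lemma mem_Rad {X : Set G} {g : G} : g ∈ Rad X ↔ g • X = X := Iff.rfl

lemma mem_Rad_of {X : Set G} {g : G} (h : ∀ x ∈ X, g * x ∈ X) : g ∈ Rad X := by
  rw [mem_Rad]
  refine Set.eq_of_subset_of_ncard_le ?_ ?_ (Set.toFinite _)
  · rintro _ ⟨x, hx, rfl⟩
    exact h x hx
  · exact (Set.ncard_image_of_injective X (mul_right_injective g)).ge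

lemma mul_mem_of_mem_Rad {X : Set G} {g x : G} (h : g ∈ Rad X) (hx : x ∈ X) : g * x ∈ X := by
  rw [mem_Rad] at h
  rw [← h]
  exact ⟨x, hx, rfl⟩

lemma radSet_eq (X : Set G) : radSet X = (Rad X : Set G) := by
  ext g
  have h : (fun x => x * g) = (fun x => g * x) := by
    funext x; exact mul_comm _ _
  simp only [radSet, h, and_self, Set.mem_ofPred_eq, SetLike.mem_coe, mem_Rad]
  rfl

/-- The radical of a basic set is an `A`-subgroup: `g` lies in it exactly when its coefficient in
`X X⁻¹` is `|X|`. -/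
lemma closed_Rad (x : G) : AClosed A (Rad (cls A x) : Set G) := by
  classical
  have := Fintype.ofFinite G
  set X := cls A x
  intro g hg h hh
  have h1 := classFun_count (closed_cls (A := A) x) (closed_cls (A := A) x).inv g h hh
  simp only [Set.mem_inv, mul_inv_rev, inv_inv] at h1
  have h2 : Finset.univ.filter (fun y => y ∈ X ∧ g⁻¹ * y ∈ X) =
      Finset.univ.filter (fun y => y ∈ X) := by
    ext y
    simp only [Finset.mem_filter, Finset.mem_univ, true_and, and_iff_left_iff_imp]
    exact fun hy => mul_mem_of_mem_Rad (inv_mem hg) hy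
  rw [h2] at h1
  have h3 : Finset.univ.filter (fun y => y ∈ X ∧ h⁻¹ * y ∈ X) =
      Finset.univ.filter (fun y => y ∈ X) := by
    refine Finset.eq_of_subset_of_card_le ?_ h1.ge
    intro y
    simp only [Finset.mem_filter, Finset.mem_univ, true_and]
    exact fun hy => hy.1
  have h4 : h⁻¹ ∈ Rad X := by
    apply mem_Rad_of
    intro y hy
    have : y ∈ Finset.univ.filter (fun y => y ∈ X ∧ h⁻¹ * y ∈ X) := by
      rw [h3]; simpa using hy
    simpa using (Finset.mem_filter.mp this).2.2
  simpa using inv_mem h4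

end Basic

/-! ### Schur's theorem on multipliers -/

section Multipliers

variable {G : Type*} [CommGroup G] [Finite G] {A : SRing G}

/-- The image of an `A`-closed set under `x ↦ x ^ q`, for a prime `q` not dividing `|G|`, is
`A`-closed: by the Frobenius map, the image is the `q`-th power of the set in the group algebra over
`ZMod q`. -/
lemma AClosed.pow_prime {q : ℕ} (hq : q.Prime) (hco : (Nat.card G).Coprime q) {X : Set G}
    (hX : AClosed A X) : AClosed A ((fun x => x ^ q) '' X) := by
  classical
  have := Fintype.ofFinite G
  have := Fact.mk hq
  have hinj : Function.Injective (fun x : G => x ^ q) := (powCoprime hco).injective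
  -- class functions over `ZMod q` are closed under products in the group algebra
  have hmul : ∀ a b : MonoidAlgebra (ZMod q) G, ClassFun A (fun g => a.coeff g) →
      ClassFun A (fun g => b.coeff g) → ClassFun A (fun g => (a * b).coeff g) := by
    intro a b ha hb
    have := ha.conv hb
    intro g h hh
    have h1 := this g h hh
    simp only [MonoidAlgebra.coeff_mul_apply_left]
    rw [Finsupp.sum_fintype _ _ (by simp), Finsupp.sum_fintype _ _ (by simp)]
    exact h1
  let a : MonoidAlgebra (ZMod q) G := ∑ x ∈ X.toFinite.toFinset, MonoidAlgebra.single x 1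
  have ha : ∀ g, a.coeff g = if g ∈ X then 1 else 0 := by
    intro g
    simp [a, MonoidAlgebra.coeff_sum, Finsupp.finsetSum_apply, Finsupp.single_apply]
  have haq : ∀ g, (a ^ q).coeff g = if g ∈ (fun x => x ^ q) '' X then 1 else 0 := by
    intro g
    have : a ^ q = ∑ x ∈ X.toFinite.toFinset, MonoidAlgebra.single (x ^ q) 1 := by
      have : CharP (MonoidAlgebra (ZMod q) G) q :=
        charP_of_injective_ringHom (algebraMap (ZMod q) (MonoidAlgebra (ZMod q) G)).injective q
      simp only [a]
      rw [sum_pow_char q]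
      simp [MonoidAlgebra.single_pow]
    rw [this, ← Finset.sum_image (g := fun x => x ^ q)
      (f := fun y => (MonoidAlgebra.single y 1 : MonoidAlgebra (ZMod q) G)) (hinj.injOn)]
    simp [MonoidAlgebra.coeff_sum, Finsupp.finsetSum_apply, Finsupp.single_apply]
  have hcf : ∀ n, ClassFun A (fun g => (a ^ (n + 1)).coeff g) := by
    intro n
    induction n with
    | zero =>
      intro g h hh
      simp only [zero_add, pow_one, ha, hX.mem_iff hh]
    | succ n ih =>
      have h1 : ClassFun A (fun g => a.coeff g) := by
        intro g h hh
        simp only [ha, hX.mem_iff hh]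
      have := hmul _ _ ih h1
      rwa [← pow_succ] at this
  have hfin := hcf (q - 1)
  rw [Nat.sub_add_cancel hq.one_lt.le] at hfin
  intro g hg h hh
  have := hfin g h hh
  simp only [haq, if_pos hg] at this
  by_contra hc
  simp [hc] at this

lemma AClosed.pow_image {m : ℕ} (hco : (Nat.card G).Coprime m) {X : Set G}
    (hX : AClosed A X) : AClosed A ((fun x => x ^ m) '' X) := by
  induction m using Nat.recOnMul generalizing X with
  | zero =>
    have h1 : Nat.card G = 1 := by simpa using hco
    have : Subsingleton G := (Nat.card_eq_one_iff_unique.mp h1).1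
    convert hX using 1
    convert Set.image_id X using 1
    congr 1
    funext x
    exact Subsingleton.elim _ _
  | one => simpa using hX
  | prime q hq => exact hX.pow_prime hq hco
  | mul a b ha hb =>
    have h1 := hb (Nat.Coprime.coprime_mul_left_right hco)
      (ha (Nat.Coprime.coprime_mul_right_right hco) hX)
    rw [Set.image_image] at h1
    simpa only [← pow_mul] using h1

variable [IsCyclic G]

lemma exists_pow_aut (σ : MulAut G) : ∃ m : ℕ, (Nat.card G).Coprime m ∧ ∀ g, σ g = g ^ m := by
  obtain ⟨x, hx⟩ := IsCyclic.exists_monoid_generator (α := G)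
  obtain ⟨m, hm⟩ := hx (σ x)
  simp only at hm
  refine ⟨m, ?_, ?_⟩
  · have h1 : orderOf x = Nat.card G :=
      orderOf_eq_card_of_forall_mem_powers hx
    have h2 : orderOf (x ^ m) = orderOf x := by rw [hm]; exact MulEquiv.orderOf_eq σ x
    rw [orderOf_pow, h1] at h2
    have := (Nat.div_eq_self.mp h2).resolve_left Nat.card_pos.ne'
    exact this
  · intro g
    obtain ⟨j, rfl⟩ := hx g
    simp only [map_pow, ← hm, ← pow_mul, mul_comm]

lemma AClosed.aut (σ : MulAut G) {X : Set G} (hX : AClosed A X) : AClosed A (σ '' X) := by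
  obtain ⟨m, hm, h⟩ := exists_pow_aut σ
  have : (σ : G → G) = fun x => x ^ m := funext h
  rw [this]
  exact hX.pow_image hm

/-- Schur's theorem on multipliers: every automorphism of a cyclic group permutes the basic sets. -/
lemma cls_aut (σ : MulAut G) (g : G) : cls A (σ g) = σ '' cls A g := by
  have key : ∀ (σ : MulAut G) (g : G), cls A (σ g) ⊆ σ '' cls A g := fun σ g =>
    (closed_cls g).aut σ (σ g) ⟨g, mem_cls A g, rfl⟩
  refine (key σ g).antisymm ?_
  rintro _ ⟨y, hy, rfl⟩
  have := key σ⁻¹ (σ g)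
  rw [MulAut.inv_apply_self] at this
  obtain ⟨z, hz, rfl⟩ := this hy
  simpa using hz

lemma mem_cls_aut (σ : MulAut G) {g h : G} (hh : h ∈ cls A g) : σ h ∈ cls A (σ g) := by
  rw [cls_aut]; exact ⟨h, hh, rfl⟩

lemma Rad_aut_mem (σ : MulAut G) {X : Set G} {l : G} (hl : l ∈ Rad X) : σ l ∈ Rad X := by
  obtain ⟨m, -, h⟩ := exists_pow_aut σ
  rw [h]; exact pow_mem hl m

lemma aut_mem (σ : MulAut G) {H : Subgroup G} {l : G} (hl : l ∈ H) : σ l ∈ H := by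
  obtain ⟨m, -, h⟩ := exists_pow_aut σ
  rw [h]; exact pow_mem hl m

lemma aut_mem_iff (σ : MulAut G) {H : Subgroup G} {l : G} : σ l ∈ H ↔ l ∈ H :=
  ⟨fun h => by simpa using aut_mem σ⁻¹ h, aut_mem σ⟩

lemma aut_comm (σ τ : MulAut G) (g : G) : σ (τ g) = τ (σ g) := by
  obtain ⟨m, -, h⟩ := exists_pow_aut σ
  rw [h, h, map_pow]

/-- The power map with exponent coprime to the order, as an automorphism. -/
noncomputable def powAut (m : ℕ) (hco : (Nat.card G).Coprime m) : MulAut G :=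
  MulEquiv.mk' (powCoprime hco) (fun x y => mul_pow x y m)

lemma powAut_apply (m : ℕ) (hco : (Nat.card G).Coprime m) (g : G) : powAut m hco g = g ^ m := rfl

end Multipliers

/-! ### Cyclic p-groups -/

section CyclicP

variable {G : Type*} [CommGroup G] [Finite G] [IsCyclic G]

lemma mem_iff_orderOf_dvd (H : Subgroup G) (g : G) : g ∈ H ↔ orderOf g ∣ Nat.card H := by
  classical
  have := Fintype.ofFinite G
  constructor
  · exact fun h => Subgroup.orderOf_dvd_natCard H h
  · intro h
    have h1 : (H : Set G).toFinset ⊆ Finset.univ.filter (fun a : G => a ^ (Nat.card H) = 1) := by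
      intro a ha
      have ha : a ∈ H := by simpa using ha
      simp only [Finset.mem_filter, Finset.mem_univ, true_and]
      exact orderOf_dvd_iff_pow_eq_one.mp (Subgroup.orderOf_dvd_natCard H ha)
    have h2 : (H : Set G).toFinset = Finset.univ.filter (fun a : G => a ^ (Nat.card H) = 1) := by
      refine Finset.eq_of_subset_of_card_le h1 ?_
      refine (IsCyclic.card_pow_eq_one_le Nat.card_pos).trans ?_
      rw [Set.toFinset_card, Nat.card_eq_fintype_card]
      exact le_of_eq (Fintype.card_congr (Equiv.refl _))
    have h3 : g ∈ (H : Set G).toFinset := by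
      rw [h2]
      simpa using orderOf_dvd_iff_pow_eq_one.mp h
    simpa using h3

lemma le_iff_card_dvd (H K : Subgroup G) : H ≤ K ↔ Nat.card H ∣ Nat.card K := by
  constructor
  · exact Subgroup.card_dvd_of_le
  · intro h g hg
    rw [mem_iff_orderOf_dvd] at hg ⊢
    exact hg.trans h

lemma eq_of_card_eq {H K : Subgroup G} (h : Nat.card H = Nat.card K) : H = K :=
  le_antisymm ((le_iff_card_dvd H K).mpr h.dvd) ((le_iff_card_dvd K H).mpr h.symm.dvd)

lemma exists_subgroup_card {d : ℕ} (hd : d ∣ Nat.card G) : ∃ P : Subgroup G, Nat.card P = d := by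
  refine ⟨(powMonoidHom d).ker, ?_⟩
  rw [IsCyclic.card_powMonoidHom_ker]
  exact Nat.gcd_eq_right hd

lemma exists_orderOf_eq {d : ℕ} (hd : d ∣ Nat.card G) : ∃ g : G, orderOf g = d := by
  obtain ⟨P, hP⟩ := exists_subgroup_card hd
  obtain ⟨g, hg⟩ := IsCyclic.exists_generator (α := P)
  refine ⟨g, ?_⟩
  rw [← hP, Subgroup.orderOf_coe]
  exact orderOf_eq_card_of_forall_mem_zpowers hg

variable {p k : ℕ} (hp : p.Prime) (hc : Nat.card G = p ^ k)
include hp hc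

lemma card_subgroup_pow (H : Subgroup G) : ∃ j ≤ k, Nat.card H = p ^ j := by
  have h1 := Subgroup.card_subgroup_dvd_card H
  rw [hc] at h1
  exact (Nat.dvd_prime_pow hp).mp h1

lemma orderOf_pow_prime (g : G) : ∃ j ≤ k, orderOf g = p ^ j := by
  have h1 := orderOf_dvd_natCard g
  rw [hc] at h1
  exact (Nat.dvd_prime_pow hp).mp h1

lemma subgroup_le_total (H K : Subgroup G) : H ≤ K ∨ K ≤ H := by
  obtain ⟨i, -, hi⟩ := card_subgroup_pow hp hc H
  obtain ⟨j, -, hj⟩ := card_subgroup_pow hp hc K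
  rw [le_iff_card_dvd, le_iff_card_dvd, hi, hj]
  exact (le_total i j).imp (pow_dvd_pow p) (pow_dvd_pow p)

/-- The subgroups of `G` form a chain, so an element outside `H` has order divisible by `p |H|`. -/
lemma dvd_orderOf_of_notMem {H : Subgroup G} {g : G} (hg : g ∉ H) :
    p * Nat.card H ∣ orderOf g := by
  obtain ⟨i, -, hi⟩ := card_subgroup_pow hp hc H
  obtain ⟨j, -, hj⟩ := orderOf_pow_prime hp hc g
  rw [mem_iff_orderOf_dvd, hi, hj, Nat.pow_dvd_pow_iff_le_right hp.one_lt] at hg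
  rw [hi, hj, ← pow_succ']
  exact pow_dvd_pow p (by omega)

lemma le_zpowers_of_notMem {H : Subgroup G} {g : G} (hg : g ∉ H) : H ≤ Subgroup.zpowers g := by
  rw [le_iff_card_dvd, Nat.card_zpowers]
  exact (Dvd.intro_left _ rfl).trans (dvd_orderOf_of_notMem hp hc hg)

lemma coprime_card {m : ℕ} (hm : ¬ p ∣ m) : (Nat.card G).Coprime m := by
  rw [hc]
  exact Nat.Coprime.pow_left k ((Nat.Prime.coprime_iff_not_dvd hp).mpr hm)

lemma exists_aut_of_orderOf_eq {g h : G} (hgh : orderOf g = orderOf h) :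
    ∃ σ : MulAut G, σ g = h := by
  by_cases h1 : g = 1
  · subst h1
    rw [orderOf_one, eq_comm, orderOf_eq_one_iff] at hgh
    exact ⟨1, by simp [hgh]⟩
  have h2 : h ∈ Subgroup.zpowers g := by
    rw [mem_iff_orderOf_dvd, Nat.card_zpowers, hgh]
  classical
  rw [mem_zpowers_iff_mem_range_orderOf] at h2
  simp only [Finset.mem_image] at h2
  obtain ⟨m, -, rfl⟩ := h2
  have hpm : ¬ p ∣ m := by
    rintro ⟨c, rfl⟩
    obtain ⟨j, -, hj⟩ := orderOf_pow_prime hp hc g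
    have hj0 : j ≠ 0 := by
      rintro rfl
      exact h1 (orderOf_eq_one_iff.mp (by simpa using hj))
    have h3 : (g ^ (p * c)) ^ (p ^ (j - 1)) = 1 := by
      rw [← pow_mul, mul_right_comm, ← pow_succ', Nat.sub_add_cancel (by omega), ← hj, pow_mul,
        pow_orderOf_eq_one, one_pow]
    have h4 := orderOf_dvd_of_pow_eq_one h3
    rw [← hgh, hj, Nat.pow_dvd_pow_iff_le_right hp.one_lt] at h4
    omega
  exact ⟨powAut m (coprime_card hp hc hpm), powAut_apply _ _ _⟩

/-- For odd `p` and `m ≡ 1` modulo `p`, the orbit of `y` under the powers of `g ↦ g ^ m` is the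
whole coset of the subgroup generated by `y ^ m * y⁻¹`: by lifting the exponent, the orbit is as
long as the coset. -/
lemma orbit_coset (hodd : Odd p) {m : ℕ} (hm1 : 1 ≤ m) (hm : p ∣ m - 1) (y z : G)
    (hz : z ∈ Subgroup.zpowers (y ^ m * y⁻¹)) : ∃ n : ℕ, y ^ (m ^ n) = y * z := by
  obtain ⟨i, -, hi⟩ := orderOf_pow_prime hp hc y
  set h := y ^ m * y⁻¹ with hh
  have hh' : h = y ^ (m - 1) := by
    rw [hh, mul_inv_eq_iff_eq_mul, ← pow_succ, Nat.sub_add_cancel hm1]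
  have hpm : ¬ p ∣ m := fun h1 => by
    have := (Nat.dvd_sub_iff_right hm1 h1).mp hm
    exact hp.one_lt.ne' (Nat.dvd_one.mp this)
  have hdvd : ∀ n, p ^ i ∣ m ^ n - 1 → p ^ i ∣ (m - 1) * n := by
    intro n hn
    have e := Int.emultiplicity_pow_sub_pow hp hodd (x := m) (y := 1)
      (by have := Int.natCast_dvd_natCast.mpr hm; rwa [Nat.cast_sub hm1] at this)
      (by simpa [Int.natCast_dvd_natCast] using hpm) n
    have h1 : ((m : ℤ) ^ n - 1 ^ n) = ((m ^ n - 1 : ℕ) : ℤ) := by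
      rw [Nat.cast_sub (Nat.one_le_pow _ _ hm1)]; simp
    have h2 : ((m : ℤ) - 1) = ((m - 1 : ℕ) : ℤ) := by
      rw [Nat.cast_sub hm1]; simp
    rw [h1, h2, Int.natCast_emultiplicity, Int.natCast_emultiplicity,
      ← emultiplicity_mul hp.prime] at e
    rw [pow_dvd_iff_le_emultiplicity] at hn ⊢
    rwa [← e]
  have hmem : ∀ n, y ^ (m ^ n) * y⁻¹ ∈ Subgroup.zpowers h := by
    intro n
    have h1 : y ^ (m ^ n) * y⁻¹ = y ^ (m ^ n - 1) := by
      rw [mul_inv_eq_iff_eq_mul, ← pow_succ, Nat.sub_add_cancel (Nat.one_le_pow _ _ hm1)]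
    obtain ⟨c, hcc⟩ : m - 1 ∣ m ^ n - 1 := by
      simpa using Nat.sub_dvd_pow_sub_pow m 1 n
    rw [h1, hcc, pow_mul, ← hh']
    exact Subgroup.pow_mem _ (Subgroup.mem_zpowers h) c
  let F : Fin (orderOf h) → Subgroup.zpowers h := fun n => ⟨y ^ (m ^ (n : ℕ)) * y⁻¹, hmem n⟩
  have aux : ∀ a b : ℕ, a ≤ b → b < orderOf h → y ^ (m ^ a) = y ^ (m ^ b) → a = b := by
    intro a b hab hb he
    obtain ⟨c, rfl⟩ := Nat.exists_eq_add_of_le hab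
    rw [pow_eq_pow_iff_modEq, hi, pow_add] at he
    have h1 : p ^ i ∣ m ^ a * (m ^ c - 1) := by
      have := (Nat.modEq_iff_dvd' (Nat.le_mul_of_pos_right _ (Nat.pos_of_ne_zero (by
        have := Nat.one_le_pow c m hm1; omega)))).mp he
      rwa [Nat.mul_sub, mul_one]
    have h2 : p ^ i ∣ m ^ c - 1 :=
      (Nat.Coprime.pow _ _ ((Nat.Prime.coprime_iff_not_dvd hp).mpr hpm)).dvd_of_dvd_mul_left h1
    have h3 := hdvd c h2
    have h4 : h ^ c = 1 := by
      rw [hh', ← pow_mul]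
      exact orderOf_dvd_iff_pow_eq_one.mp (hi ▸ h3)
    have h5 := orderOf_dvd_of_pow_eq_one h4
    have h6 : c = 0 := Nat.eq_zero_of_dvd_of_lt h5 (by omega)
    omega
  have hinj : Function.Injective F := by
    intro a b hab
    have h1 : y ^ (m ^ (a : ℕ)) = y ^ (m ^ (b : ℕ)) := by
      simpa [F] using hab
    rcases le_total (a : ℕ) b with h2 | h2
    · exact Fin.ext (aux _ _ h2 b.2 h1)
    · exact Fin.ext (aux _ _ h2 a.2 h1.symm).symm
  have hbij : Function.Bijective F := by
    refine hinj.bijective_of_nat_card_le ?_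
    rw [Nat.card_zpowers, Nat.card_fin]
  obtain ⟨n, hn⟩ := hbij.2 ⟨z, hz⟩
  refine ⟨n, ?_⟩
  have h1 : y ^ (m ^ (n : ℕ)) * y⁻¹ = z := congrArg Subtype.val hn
  rw [← h1]; simp

/-- If `X` is stable under the automorphism `σ`, and `σ` moves `y ∈ X` by an element of a subgroup
not containing `y`, then `X` contains the coset of `y` modulo the group generated by
`σ y * y⁻¹`. -/
lemma orbit_coset_aut (hodd : Odd p) {σ : MulAut G} {y : G} {H : Subgroup G} (hy : y ∉ H)
    (h : σ y * y⁻¹ ∈ H) {X : Set G} (hX : ∀ x ∈ X, σ x ∈ X) (hyX : y ∈ X) {z : G}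
    (hz : z ∈ Subgroup.zpowers (σ y * y⁻¹)) : y * z ∈ X := by
  obtain ⟨m, -, hm⟩ := exists_pow_aut σ
  have hcard : 0 < Nat.card G := Nat.card_pos
  -- replace the exponent by a positive one
  obtain ⟨m, hm1, hm⟩ : ∃ m : ℕ, 1 ≤ m ∧ ∀ g, σ g = g ^ m :=
    ⟨m + Nat.card G, by omega, fun g => by rw [pow_add, pow_card_eq_one', mul_one, hm]⟩
  have hp1 : p ∣ m - 1 := by
    by_contra hcon
    apply hy
    have h1 : σ y * y⁻¹ = y ^ (m - 1) := by
      rw [hm, mul_inv_eq_iff_eq_mul, ← pow_succ, Nat.sub_add_cancel hm1]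
    have h2 := aut_mem (powAut (m - 1) (coprime_card hp hc hcon))⁻¹ h
    rw [h1, ← powAut_apply (m - 1) (coprime_card hp hc hcon), MulAut.inv_apply_self] at h2
    exact h2
  rw [hm] at hz
  obtain ⟨n, hn⟩ := orbit_coset hp hc hodd hm1 hp1 y z hz
  rw [← hn]
  clear hn
  induction n with
  | zero => simpa using hyX
  | succ n ih =>
    have := hX _ ih
    rwa [hm, ← pow_mul, ← pow_succ] at this

end CyclicP

/-! ### The largest proper A-subgroup -/

section Structure

variable {G : Type*} [CommGroup G] [Finite G] [IsCyclic G]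

/-- The Frattini subgroup `G ^ p` of a cyclic `p`-group `G`; for `G ≠ 1` it is the unique maximal
subgroup. -/
def Phi (p : ℕ) (G : Type*) [CommGroup G] : Subgroup G := (powMonoidHom p : G →* G).range

/-- `H` is the largest proper `A`-subgroup. -/
structure IsMaxClosed (A : SRing G) (H : Subgroup G) : Prop where
  closed : AClosed A (H : Set G)
  ne_top : H ≠ ⊤
  le_of : ∀ K : Subgroup G, AClosed A (K : Set G) → K ≠ ⊤ → K ≤ H

lemma Rad_aut (σ : MulAut G) (X : Set G) : Rad (σ '' X) = Rad X := by
  have key : ∀ (σ : MulAut G) (X : Set G), Rad X ≤ Rad (σ '' X) := by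
    intro σ X l hl
    apply mem_Rad_of
    rintro _ ⟨y, hy, rfl⟩
    refine ⟨σ⁻¹ l * y, mul_mem_of_mem_Rad (Rad_aut_mem _ hl) hy, by simp⟩
  refine le_antisymm ?_ (key σ X)
  have := key σ⁻¹ (σ '' X)
  rwa [Set.image_image, show (fun x => σ⁻¹ (σ x)) = id from by funext x; simp, Set.image_id] at this

lemma aut_stab {A : SRing G} {σ : MulAut G} {x u y : G} (hu : u ∈ cls A x) (hσ : σ u ∈ cls A x)
    (hy : y ∈ cls A x) : σ y ∈ cls A x := by
  have h1 : σ y ∈ cls A (σ u) := mem_cls_aut σ (by rw [cls_eq hu]; exact hy)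
  rwa [cls_eq hσ] at h1

variable {p k : ℕ} (hp : p.Prime) (hc : Nat.card G = p ^ k) (hk : 1 ≤ k)
include hp hc hk

lemma card_Phi : p * Nat.card (Phi p G) = p ^ k := by
  obtain ⟨k, rfl⟩ : ∃ j, k = j + 1 := ⟨k - 1, by omega⟩
  rw [Phi, IsCyclic.card_powMonoidHom_range, hc, Nat.gcd_eq_right (dvd_pow_self p (by omega)),
    pow_succ', Nat.mul_div_cancel_left _ hp.pos]

lemma Phi_ne_top : Phi p G ≠ ⊤ := by
  intro h
  have h1 := card_Phi hp hc hk
  rw [h, Subgroup.card_top, hc] at h1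
  have := hp.one_lt
  have := pow_pos hp.pos k
  nlinarith

lemma le_Phi {H : Subgroup G} (hH : H ≠ ⊤) : H ≤ Phi p G := by
  rcases subgroup_le_total hp hc H (Phi p G) with h | h
  · exact h
  by_contra hn
  obtain ⟨g, hg, hgP⟩ := SetLike.not_le_iff_exists.mp hn
  apply hH
  have h1 := dvd_orderOf_of_notMem hp hc hgP
  rw [card_Phi hp hc hk] at h1
  apply Subgroup.eq_top_of_card_eq
  apply Nat.dvd_antisymm (Subgroup.card_subgroup_dvd_card H)
  rw [hc]
  exact h1.trans (Subgroup.orderOf_dvd_natCard H hg)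

lemma orderOf_of_notMem_Phi {x : G} (hx : x ∉ Phi p G) : orderOf x = p ^ k := by
  have h1 := dvd_orderOf_of_notMem hp hc hx
  rw [card_Phi hp hc hk] at h1
  exact Nat.dvd_antisymm (hc ▸ orderOf_dvd_natCard x) h1

lemma exists_notMem_Phi : ∃ x : G, x ∉ Phi p G := by
  by_contra! h
  exact Phi_ne_top hp hc hk (eq_top_iff.mpr fun x _ => h x)

lemma zpowers_of_notMem_Phi {x : G} (hx : x ∉ Phi p G) : Subgroup.zpowers x = ⊤ := by
  by_contra h
  exact hx (le_Phi hp hc hk h (Subgroup.mem_zpowers x))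

lemma exists_aut_of_gen {x y : G} (hx : x ∉ Phi p G) (hy : y ∉ Phi p G) :
    ∃ σ : MulAut G, σ x = y :=
  exists_aut_of_orderOf_eq hp hc
    ((orderOf_of_notMem_Phi hp hc hk hx).trans (orderOf_of_notMem_Phi hp hc hk hy).symm)

lemma aut_ext_gen {x : G} (hx : x ∉ Phi p G) {σ τ : MulAut G} (h : σ x = τ x) : σ = τ := by
  ext g
  have hg : g ∈ Subgroup.zpowers x := by rw [zpowers_of_notMem_Phi hp hc hk hx]; trivial
  obtain ⟨n, rfl⟩ := Subgroup.mem_zpowers_iff.mp hg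
  simp [h]

variable (A : SRing G)

lemma exists_maxClosed : ∃ H : Subgroup G, IsMaxClosed A H := by
  have hfin : {H : Subgroup G | AClosed A (H : Set G) ∧ H ≠ ⊤}.Finite := Set.toFinite _
  have hbot : AClosed A ((⊥ : Subgroup G) : Set G) := by
    intro g hg
    rw [Subgroup.mem_bot.mp hg, cls_one]
    simp
  have hbt : (⊥ : Subgroup G) ≠ ⊤ := by
    intro h
    exact Phi_ne_top hp hc hk (top_le_iff.mp (h ▸ bot_le))
  obtain ⟨H, hH⟩ := hfin.exists_maximal ⟨⊥, hbot, hbt⟩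
  refine ⟨H, hH.1.1, hH.1.2, fun K hK hKt => ?_⟩
  rcases subgroup_le_total hp hc K H with h | h
  · exact h
  · exact hH.2 ⟨hK, hKt⟩ h

variable {A} {H : Subgroup G} (hH : IsMaxClosed A H)
include hH

lemma exists_gen_mem_cls {g : G} (hg : g ∉ H) : ∃ y ∈ cls A g, y ∉ Phi p G := by
  by_contra! hcon
  have h1 : Subgroup.closure (cls A g) ≤ Phi p G := (Subgroup.closure_le _).mpr hcon
  have h2 := hH.le_of _ (closed_closure (closed_cls g))
    (fun h => Phi_ne_top hp hc hk (top_le_iff.mp (h ▸ h1)))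
  exact hg (h2 (Subgroup.subset_closure (mem_cls A g)))

/-- Every basic set outside `H` is the image of a fixed highest basic set. -/
lemma exists_aut_cls {g x : G} (hg : g ∉ H) (hx : x ∉ Phi p G) :
    ∃ σ : MulAut G, cls A g = σ '' cls A x := by
  obtain ⟨y, hy, hyP⟩ := exists_gen_mem_cls hp hc hk hH hg
  obtain ⟨σ, rfl⟩ := exists_aut_of_gen hp hc hk hx hyP
  exact ⟨σ, by rw [← cls_aut, cls_eq hy]⟩

lemma notMem_of_gen {x : G} (hx : x ∉ Phi p G) : x ∉ H :=
  fun h => hx (le_Phi hp hc hk hH.ne_top h)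

lemma Rad_cls_eq {g x : G} (hg : g ∉ H) (hx : x ∉ Phi p G) :
    Rad (cls A g) = Rad (cls A x) := by
  obtain ⟨σ, hσ⟩ := exists_aut_cls hp hc hk hH hg hx
  rw [hσ, Rad_aut]

lemma Rad_le {x : G} (hx : x ∉ Phi p G) : Rad (cls A x) ≤ H := by
  refine hH.le_of _ (closed_Rad x) fun h => ?_
  have h1 : (1 : G) ∈ cls A x := by
    have : x⁻¹ ∈ Rad (cls A x) := by rw [h]; trivial
    simpa using mul_mem_of_mem_Rad this (mem_cls A x)
  have h2 := cls_eq h1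
  rw [cls_one] at h2
  have h3 : x ∈ ({1} : Set G) := by rw [h2]; exact mem_cls A x
  rw [Set.mem_singleton_iff] at h3
  exact hx (h3 ▸ one_mem _)

omit hk hH in
/-- If a basic set `X` with radical `L` contains elements `u`, `x'` with
`|L| < |u| < |x'|`, then it contains the coset of `x'` by the subgroup of order `p |L|`. -/
lemma coset_subset_of_orders {x u x' z : G} (hu : u ∈ cls A x) (hx' : x' ∈ cls A x)
    (h1 : Nat.card (Rad (cls A x)) < orderOf u) (h2 : orderOf u < orderOf x')
    (hz : orderOf z ∣ p * Nat.card (Rad (cls A x))) : x' * z ∈ cls A x := by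
  obtain ⟨l, -, hl⟩ := card_subgroup_pow hp hc (Rad (cls A x))
  obtain ⟨a, -, ha⟩ := orderOf_pow_prime hp hc u
  obtain ⟨b, -, hb⟩ := orderOf_pow_prime hp hc x'
  rw [hl, ha, Nat.pow_lt_pow_iff_right hp.one_lt] at h1
  rw [ha, hb, Nat.pow_lt_pow_iff_right hp.one_lt] at h2
  rw [hl, ← pow_succ'] at hz
  have hzm : z ∈ Subgroup.zpowers x' := by
    rw [mem_iff_orderOf_dvd, Nat.card_zpowers, hb]
    exact hz.trans (pow_dvd_pow p (by omega))
  classical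
  rw [mem_zpowers_iff_mem_range_orderOf] at hzm
  simp only [Finset.mem_image] at hzm
  obtain ⟨e, -, rfl⟩ := hzm
  have he : p ^ (b - l - 1) ∣ e := by
    have h3 := orderOf_dvd_iff_pow_eq_one.mp hz
    rw [← pow_mul] at h3
    have h4 := orderOf_dvd_of_pow_eq_one h3
    rw [hb, show b = (b - l - 1) + (l + 1) by omega, pow_add] at h4
    exact Nat.dvd_of_mul_dvd_mul_right (pow_pos hp.pos _) h4
  obtain ⟨c, rfl⟩ := he
  have hm : ¬ p ∣ 1 + p ^ (b - l - 1) * c := by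
    intro h
    have h3 : p ∣ p ^ (b - l - 1) * c := (dvd_pow_self p (by omega)).mul_right c
    exact hp.one_lt.ne' (Nat.dvd_one.mp ((Nat.dvd_add_left h3).mp h))
  have hσu : powAut (1 + p ^ (b - l - 1) * c) (coprime_card hp hc hm) u ∈ cls A x := by
    rw [powAut_apply, pow_add, pow_one, mul_comm]
    refine mul_mem_of_mem_Rad ?_ hu
    rw [mem_iff_orderOf_dvd, hl]
    apply orderOf_dvd_of_pow_eq_one
    rw [← pow_mul, ← orderOf_dvd_iff_pow_eq_one, ha, mul_right_comm, ← pow_add]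
    exact (pow_dvd_pow p (by omega)).mul_right c
  have := aut_stab hu hσu hx'
  rwa [powAut_apply, pow_add, pow_one] at this

lemma exists_mem_cls_orderOf {x g : G} (hx : x ∉ Phi p G) (hg : g ∉ H) :
    ∃ y ∈ cls A x, orderOf y = orderOf g := by
  obtain ⟨σ, hσ⟩ := exists_aut_cls hp hc hk hH hg hx
  have := mem_cls A g
  rw [hσ] at this
  obtain ⟨y, hy, rfl⟩ := this
  exact ⟨y, hy, (MulEquiv.orderOf_eq σ y).symm⟩

lemma notMem_of_mem_cls {x y : G} (hx : x ∉ Phi p G) (hy : y ∈ cls A x) : y ∉ H :=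
  fun h => notMem_of_gen hp hc hk hH hx ((hH.closed.mem_iff hy).mp h)

end Structure

/-! ### The largest proper A-subgroup differs from the maximal subgroup -/

section TypeB

variable {G : Type*} [CommGroup G] [Finite G] [IsCyclic G]

open Classical in
lemma card_eq_filter [Fintype G] (P : Subgroup G) :
    Nat.card P = (Finset.univ.filter (· ∈ P)).card := by
  rw [Nat.card_eq_fintype_card, ← Fintype.card_subtype]

variable {p k : ℕ} (hp : p.Prime) (hc : Nat.card G = p ^ k) (hk : 1 ≤ k)
variable {A : SRing G} {H : Subgroup G} (hH : IsMaxClosed A H)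
include hp hc hk hH

lemma lt_of_ne_Phi (hne : H ≠ Phi p G) : p * Nat.card H < p ^ k := by
  rw [← card_Phi hp hc hk]
  refine (Nat.mul_lt_mul_left hp.pos).mpr (lt_of_le_of_ne ?_ ?_)
  · exact Nat.le_of_dvd Nat.card_pos (Subgroup.card_dvd_of_le (le_Phi hp hc hk hH.ne_top))
  · exact fun h => hne (eq_of_card_eq h)

lemma pH_dvd : p * Nat.card H ∣ Nat.card G := by
  rw [hc, ← card_Phi hp hc hk]
  exact Nat.mul_dvd_mul_left p (Subgroup.card_dvd_of_le (le_Phi hp hc hk hH.ne_top))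

/-- If the largest proper `A`-subgroup `H` is not the maximal subgroup of `G`, then `H` is the
radical of the highest basic sets. -/
lemma Rad_eq_of_ne_Phi (hodd : Odd p) (hne : H ≠ Phi p G) {x : G} (hx : x ∉ Phi p G) :
    Rad (cls A x) = H := by
  classical
  have := Fintype.ofFinite G
  by_contra hLH
  set L := Rad (cls A x) with hL
  have hLle : L ≤ H := Rad_le hp hc hk hH hx
  have hlt := lt_of_ne_Phi hp hc hk hH hne
  have hHpos : 0 < Nat.card H := Nat.card_pos
  have hLpos : 0 < Nat.card L := Nat.card_pos
  have h2p := hp.two_le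
  obtain ⟨h0, hh0, hh0L⟩ := SetLike.exists_of_lt (lt_of_le_of_ne hLle hLH)
  have hpL : p * Nat.card L ∣ Nat.card H :=
    (dvd_orderOf_of_notMem hp hc hh0L).trans (Subgroup.orderOf_dvd_natCard H hh0)
  obtain ⟨P, hP⟩ := exists_subgroup_card (hpL.trans (Subgroup.card_subgroup_dvd_card H))
  have hPH : P ≤ H := (le_iff_card_dvd _ _).mpr (hP ▸ hpL)
  have hordx : orderOf x = p ^ k := orderOf_of_notMem_Phi hp hc hk hx
  -- an element of `X` of the smallest possible order
  obtain ⟨u0, hu0⟩ := exists_orderOf_eq (pH_dvd hp hc hk hH)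
  have hu0H : u0 ∉ H := by
    rw [mem_iff_orderOf_dvd, hu0]
    intro h
    have := Nat.le_of_dvd hHpos h
    nlinarith
  obtain ⟨u, hu, huo⟩ := exists_mem_cls_orderOf hp hc hk hH hx hu0H
  rw [hu0] at huo
  have hLu : Nat.card L < orderOf u := by
    have := Nat.le_of_dvd hHpos (Subgroup.card_dvd_of_le hLle)
    rw [huo]; nlinarith
  have hbig : ∀ y ∈ cls A x, p * Nat.card H < orderOf y → ∀ z ∈ P, y * z ∈ cls A x := by
    intro y hy hyo z hz
    refine coset_subset_of_orders hp hc hu hy hLu (huo ▸ hyo) ?_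
    rw [← hL, ← hP]
    exact Subgroup.orderOf_dvd_natCard P hz
  -- the number of elements of `X` in a coset `y H`, for `y ∈ X`, does not depend on `y`, hence is
  -- at least `|P| > |L|` also for the elements `y` of smallest order
  have hsmall : ∀ y ∈ cls A x, orderOf y = p * Nat.card H → ∀ z ∈ P, y * z ∈ cls A x := by
    intro y hy hyo z hz
    have hyH := notMem_of_mem_cls hp hc hk hH hx hy
    have hcount := classFun_count (closed_cls (A := A) x) hH.closed x y hy
    simp only at hcount
    have hge : Nat.card P ≤ (Finset.univ.filter (fun a => a ∈ cls A x ∧ a⁻¹ * x ∈ (H : Set G))).card := by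
      rw [card_eq_filter P]
      refine (Finset.card_image_of_injective _
        (mul_right_injective x)).symm.le.trans (Finset.card_le_card ?_)
      intro a ha
      simp only [Finset.mem_image, Finset.mem_filter, Finset.mem_univ, true_and] at ha
      obtain ⟨z, hz, rfl⟩ := ha
      simp only [Finset.mem_filter, Finset.mem_univ, true_and]
      refine ⟨hbig x (mem_cls A x) (hordx ▸ hlt) z hz, ?_⟩
      simpa using hPH hz
    rw [← hcount] at hge
    obtain ⟨a, haX, haH, haL⟩ : ∃ a ∈ cls A x, a⁻¹ * y ∈ H ∧ a⁻¹ * y ∉ L := by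
      by_contra! hcon
      have h1 : (Finset.univ.filter (fun a => a ∈ cls A x ∧ a⁻¹ * y ∈ (H : Set G))).card
          ≤ Nat.card L := by
        rw [card_eq_filter L]
        refine Finset.card_le_card_of_injOn (fun a => a⁻¹ * y) ?_ ?_
        · intro a ha
          simp only [Finset.coe_filter, Finset.mem_univ, true_and, Set.mem_ofPred_eq] at ha
          simpa using hcon a ha.1 ha.2
        · intro a _ b _ hab
          simpa using hab
      rw [hP] at hge
      nlinarith
    have haH' := notMem_of_mem_cls hp hc hk hH hx haX
    have hay : a * y⁻¹ ∈ H := by simpa [mul_comm] using inv_mem haH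
    have hayL : a * y⁻¹ ∉ L := fun h => haL (by simpa [mul_comm] using inv_mem h)
    have hao : orderOf a = orderOf y := by
      apply Nat.dvd_antisymm
      · have : a ∈ Subgroup.zpowers y := by
          have h1 := le_zpowers_of_notMem hp hc hyH hay
          simpa using mul_mem h1 (Subgroup.mem_zpowers y)
        rw [mem_iff_orderOf_dvd, Nat.card_zpowers] at this
        exact this
      · rw [hyo]; exact dvd_orderOf_of_notMem hp hc haH'
    obtain ⟨σ, rfl⟩ := exists_aut_of_orderOf_eq hp hc hao.symm
    refine orbit_coset_aut hp hc hodd hyH hay (fun b hb => aut_stab hy haX hb) hy ?_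
    have h1 := dvd_orderOf_of_notMem hp hc hayL
    rw [mem_iff_orderOf_dvd, Nat.card_zpowers]
    exact (Subgroup.orderOf_dvd_natCard P hz).trans (hP ▸ h1)
  have hPL : P ≤ L := by
    intro z hz
    apply mem_Rad_of
    intro y hy
    have h1 := dvd_orderOf_of_notMem hp hc (notMem_of_mem_cls hp hc hk hH hx hy)
    rw [mul_comm]
    rcases (Nat.le_of_dvd (orderOf_pos y) h1).eq_or_lt with h2 | h2
    · exact hsmall y hy h2.symm z hz
    · exact hbig y hy h2 z hz
  have := Nat.le_of_dvd hLpos (Subgroup.card_dvd_of_le hPL)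
  rw [hP] at this
  nlinarith

/-- Averaging a class function over `Aut(G)`: the sum of the values over an `Aut(G)`-invariant set
outside `H` is proportional to the size of the set. -/
lemma sum_classFun [Fintype (MulAut G)] {x : G} (hx : x ∉ Phi p G) {N : G → ℤ}
    (hN : ClassFun A N) {T : Finset G} (hT : ∀ (σ : MulAut G), ∀ g ∈ T, σ g ∈ T)
    (hTH : ∀ g ∈ T, g ∉ H) :
    (Fintype.card (MulAut G) : ℤ) * ∑ g ∈ T, N g = T.card * ∑ σ : MulAut G, N (σ x) := by
  have h1 : ∀ σ : MulAut G, ∑ g ∈ T, N (σ g) = ∑ g ∈ T, N g := by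
    intro σ
    refine Finset.sum_bij' (fun g _ => σ g) (fun g _ => σ⁻¹ g) (fun g hg => hT σ g hg)
      (fun g hg => hT σ⁻¹ g hg) (by simp) (by simp) (fun g _ => rfl)
  have h2 : ∀ g ∈ T, ∑ σ : MulAut G, N (σ g) = ∑ σ : MulAut G, N (σ x) := by
    intro g hg
    obtain ⟨τ, hτ⟩ := exists_aut_cls hp hc hk hH (hTH g hg) hx
    have h3 : ∀ σ : MulAut G, N (σ g) = N ((σ * τ) x) := by
      intro σ
      apply hN
      rw [MulAut.mul_apply]
      apply mem_cls_aut
      rw [cls_aut, ← hτ]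
      exact mem_cls A g
    simp only [h3]
    exact Fintype.sum_equiv (Equiv.mulRight τ) _ _ (fun σ => rfl)
  calc (Fintype.card (MulAut G) : ℤ) * ∑ g ∈ T, N g
      = ∑ σ : MulAut G, ∑ g ∈ T, N (σ g) := by
        simp only [h1, Finset.sum_const, Finset.card_univ, nsmul_eq_mul]
    _ = ∑ g ∈ T, ∑ σ : MulAut G, N (σ g) := Finset.sum_comm
    _ = _ := by
        rw [Finset.sum_congr rfl h2, Finset.sum_const, nsmul_eq_mul]

/-- If the largest proper `A`-subgroup `H` is not the maximal subgroup of `G`, then all elements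
outside `H` form a single basic set. -/
lemma cls_eq_compl (hodd : Odd p) (hne : H ≠ Phi p G) {g : G} (hg : g ∉ H) :
    cls A g = (H : Set G)ᶜ := by
  classical
  have := Fintype.ofFinite G
  have : Finite (MulAut G) :=
    Finite.of_injective (fun σ : MulAut G => (σ : G → G)) DFunLike.coe_injective
  have := Fintype.ofFinite (MulAut G)
  obtain ⟨x, hx⟩ := exists_notMem_Phi hp hc hk
  have hRad := Rad_eq_of_ne_Phi hp hc hk hH hodd hne hx
  set X := cls A x with hX
  have hlt := lt_of_ne_Phi hp hc hk hH hne
  have hHpos : 0 < Nat.card H := Nat.card_pos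
  have h2p := hp.two_le
  have hordx : orderOf x = p ^ k := orderOf_of_notMem_Phi hp hc hk hx
  obtain ⟨P, hP⟩ := exists_subgroup_card (pH_dvd hp hc hk hH)
  have hHP : H ≤ P := (le_iff_card_dvd _ _).mpr (hP ▸ Dvd.intro_left _ rfl)
  obtain ⟨u0, hu0⟩ := exists_orderOf_eq (pH_dvd hp hc hk hH)
  have hu0H : u0 ∉ H := by
    rw [mem_iff_orderOf_dvd, hu0]
    intro h
    have := Nat.le_of_dvd hHpos h
    nlinarith
  obtain ⟨u, hu, huo⟩ := exists_mem_cls_orderOf hp hc hk hH hx hu0H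
  rw [hu0] at huo
  have huP : u ∈ P := by rw [mem_iff_orderOf_dvd, huo, hP]
  have hXH : ∀ a ∈ X, a ∉ H := fun a ha => notMem_of_mem_cls hp hc hk hH hx ha
  have hxP : x ∉ P := by
    rw [mem_iff_orderOf_dvd, hordx, hP]
    exact Nat.not_dvd_of_pos_of_lt (by positivity) hlt
  -- the elements of `X` outside `P` form a union of `P`-cosets
  have hW : ∀ a ∈ X, a ∉ P → ∀ z ∈ P, z⁻¹ * a ∈ X := by
    intro a ha haP z hz
    rw [mul_comm]
    refine coset_subset_of_orders hp hc hu ha ?_ ?_ ?_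
    · rw [← hX, hRad, huo]; nlinarith
    · rw [mem_iff_orderOf_dvd, hP] at haP
      have h1 := dvd_orderOf_of_notMem hp hc (hXH a ha)
      rw [huo]
      exact lt_of_le_of_ne (Nat.le_of_dvd (orderOf_pos a) h1) fun h => haP h.symm.dvd
    · rw [← hX, hRad, ← hP]
      exact Subgroup.orderOf_dvd_natCard P (inv_mem hz)
  -- `N` is the coefficient function of `X X⁻¹`; averaging the class functions `e` and `N` over
  -- `P \ H` and `G \ H` gives two equations that determine `|X ∩ P|`
  set e : G → ℤ := fun a => if a ∈ X then 1 else 0 with he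
  set N : G → ℤ := fun g => ∑ a, e a * e (g⁻¹ * a) with hNdef
  have heC : ClassFun A e := by
    intro g h hh
    simp only [he, (closed_cls (A := A) x).mem_iff hh, hX]
  have heI : ClassFun A (fun a => e a⁻¹) := by
    intro g h hh
    exact heC g⁻¹ h⁻¹ (by rw [cls_inv]; simpa using hh)
  have hNC : ClassFun A N := by
    have := heC.conv heI
    intro g h hh
    have h1 := this g h hh
    simpa [hNdef, mul_comm] using h1
  set TP : Finset G := Finset.univ.filter (fun g => g ∈ P ∧ g ∉ H) with hTP
  set TG : Finset G := Finset.univ.filter (fun g => g ∉ H) with hTG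
  have hTPi : ∀ (σ : MulAut G), ∀ g ∈ TP, σ g ∈ TP := by
    intro σ g hg
    simpa [hTP, aut_mem_iff] using hg
  have hTGi : ∀ (σ : MulAut G), ∀ g ∈ TG, σ g ∈ TG := by
    intro σ g hg
    simpa [hTG, aut_mem_iff] using hg
  have hTPH : ∀ g ∈ TP, g ∉ H := fun g hg => (Finset.mem_filter.mp hg).2.2
  have hTGH : ∀ g ∈ TG, g ∉ H := fun g hg => (Finset.mem_filter.mp hg).2
  have hAut : (Fintype.card (MulAut G) : ℤ) ≠ 0 := by
    simp
  have havg : ∀ f : G → ℤ, ClassFun A f →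
      (TG.card : ℤ) * ∑ g ∈ TP, f g = TP.card * ∑ g ∈ TG, f g := by
    intro f hf
    have h1 := sum_classFun hp hc hk hH hx hf hTPi hTPH
    have h2 := sum_classFun hp hc hk hH hx hf hTGi hTGH
    apply mul_left_cancel₀ hAut
    calc _ = (TG.card : ℤ) * (Fintype.card (MulAut G) * ∑ g ∈ TP, f g) := by ring
      _ = TP.card * (Fintype.card (MulAut G) * ∑ g ∈ TG, f g) := by rw [h1, h2]; ring
      _ = _ := by ring
  have hsplitP : ∀ f : G → ℤ, ∑ g ∈ TP, f g =
      ∑ g with g ∈ P, f g - ∑ g with g ∈ H, f g := by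
    intro f
    rw [eq_sub_iff_add_eq, ← Finset.sum_filter_add_sum_filter_not
      (Finset.univ.filter (fun g => g ∈ P)) (fun g => g ∉ H), Finset.filter_filter,
      Finset.filter_filter]
    congr 2
    ext g
    simp only [Finset.mem_filter, Finset.mem_univ, true_and, not_not]
    exact ⟨fun h => ⟨hHP h, h⟩, fun h => h.2⟩
  have hsplitG : ∀ f : G → ℤ, ∑ g ∈ TG, f g = ∑ g, f g - ∑ g with g ∈ H, f g := by
    intro f
    rw [eq_sub_iff_add_eq, ← Finset.sum_filter_add_sum_filter_not Finset.univ (fun g => g ∉ H)]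
    simp only [not_not, hTG]
  set h : ℤ := ((Nat.card H : ℕ) : ℤ) with hhdef
  set r : ℤ := ∑ a, e a with hr
  set q : ℤ := ∑ a with a ∈ P, e a with hq
  set w : ℤ := ∑ a with a ∉ P, e a with hw
  have hqw : q + w = r := Finset.sum_filter_add_sum_filter_not _ _ _
  have heH : ∑ a with a ∈ H, e a = 0 := by
    apply Finset.sum_eq_zero
    intro a ha
    have : a ∉ X := fun h1 => hXH a h1 (by simpa using ha)
    simp [he, this]
  have hcardP : ((Finset.univ.filter (· ∈ P)).card : ℤ) = p * h := by
    rw [← card_eq_filter, hP]; simp [hhdef]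
  have hcardH : ((Finset.univ.filter (· ∈ H)).card : ℤ) = h := by
    rw [← card_eq_filter]
  have hTPc : (TP.card : ℤ) = p * h - h := by
    have := hsplitP (fun _ => 1)
    simp only [Finset.sum_const, nsmul_eq_mul, mul_one] at this
    rw [this, hcardP, hcardH]
  have hTGpos : (0 : ℤ) < TG.card := by
    have : TG.Nonempty := ⟨x, by simpa [hTG] using notMem_of_gen hp hc hk hH hx⟩
    exact_mod_cast this.card_pos
  have hcomm : ∀ F : Finset G, ∑ g ∈ F, N g = ∑ a, e a * ∑ g ∈ F, e (g⁻¹ * a) := by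
    intro F
    simp only [hNdef, Finset.mul_sum]
    exact Finset.sum_comm
  have hNall : ∑ g, N g = r * r := by
    rw [hcomm, hr, Finset.sum_mul]
    refine Finset.sum_congr rfl fun a _ => ?_
    congr 1
    exact Fintype.sum_equiv ((Equiv.inv G).trans (Equiv.mulRight a)) _ _ (fun g => rfl)
  have hNH : ∑ g with g ∈ H, N g = r * h := by
    rw [hcomm, hr, Finset.sum_mul]
    refine Finset.sum_congr rfl fun a _ => ?_
    by_cases ha : a ∈ X
    · congr 1
      rw [← hcardH, ← mul_one ((Finset.card _ : ℕ) : ℤ), ← nsmul_eq_mul, ← Finset.sum_const]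
      refine Finset.sum_congr rfl fun g hg => ?_
      have : g⁻¹ * a ∈ X := by
        refine mul_mem_of_mem_Rad ?_ ha
        rw [hRad]
        exact inv_mem (by simpa using hg)
      simp [he, this]
    · simp [he, ha]
  have hNP : ∑ g with g ∈ P, N g = q * q + w * (p * h) := by
    rw [hcomm, ← Finset.sum_filter_add_sum_filter_not Finset.univ (fun a => a ∈ P)]
    congr 1
    · conv_rhs => rw [hq, Finset.sum_mul]
      refine Finset.sum_congr rfl fun a ha => ?_
      have ha : a ∈ P := by simpa using ha
      congr 1
      refine Finset.sum_bij' (fun g _ => g⁻¹ * a) (fun g _ => g⁻¹ * a) ?_ ?_ ?_ ?_ ?_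
      · intro g hg
        simp only [Finset.mem_filter, Finset.mem_univ, true_and] at hg ⊢
        exact mul_mem (inv_mem hg) ha
      · intro g hg
        simp only [Finset.mem_filter, Finset.mem_univ, true_and] at hg ⊢
        exact mul_mem (inv_mem hg) ha
      · intro g _; simp
      · intro g _; simp
      · intro g _; rfl
    · rw [hw, Finset.sum_mul]
      refine Finset.sum_congr rfl fun a ha => ?_
      have haP : a ∉ P := by simpa using ha
      by_cases ha : a ∈ X
      · congr 1
        rw [← hcardP, ← mul_one ((Finset.card _ : ℕ) : ℤ), ← nsmul_eq_mul, ← Finset.sum_const]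
        refine Finset.sum_congr rfl fun g hg => ?_
        have : g⁻¹ * a ∈ X := hW a ha haP g (by simpa using hg)
        simp [he, this]
      · simp [he, ha]
  have hwpos : 0 < w := by
    refine Finset.sum_pos' (fun a _ => by simp only [he]; split_ifs <;> norm_num) ⟨x, ?_, ?_⟩
    · simpa using hxP
    · simp [he, hX, mem_cls A x]
  have e1 := havg e heC
  have e2 := havg N hNC
  rw [hsplitP, hsplitG, heH, sub_zero, sub_zero, ← hq, ← hr] at e1
  rw [hsplitP, hsplitG, hNH, hNP, hNall] at e2
  have e3 : q = p * h - h := by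
    rw [← hTPc]
    have h1 : (TG.card : ℤ) * (q * q + w * (p * h) - r * h - (q * r - q * h)) = 0 := by
      linear_combination e2 - (r - h) * e1
    have h2 : q * q + w * (p * h) - r * h - (q * r - q * h) = 0 :=
      (mul_eq_zero.mp h1).resolve_left hTGpos.ne'
    have h3 : w * (q - (p * h - h)) = 0 := by
      rw [← hqw] at h2
      linear_combination -h2
    have := (mul_eq_zero.mp h3).resolve_left hwpos.ne'
    rw [hTPc]; linarith
  -- hence `X` contains `P \ H`
  have hPX : ∀ a ∈ P, a ∉ H → a ∈ X := by
    have h1 : ∑ a ∈ TP, (1 - e a) = 0 := by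
      rw [Finset.sum_sub_distrib, hsplitP e, heH, ← hq, e3]
      simp [hTPc]
    have h2 := (Finset.sum_eq_zero_iff_of_nonneg (fun a _ => by
      simp only [he]; split_ifs <;> norm_num)).mp h1
    intro a haP haH
    have h3 := h2 a (by simp [hTP, haP, haH])
    by_contra hcon
    simp [he, hcon] at h3
  have hall : ∀ g, g ∉ H → cls A g = X := by
    intro g hg
    obtain ⟨σ, hσ⟩ := exists_aut_cls hp hc hk hH hg hx
    have h1 : σ u ∈ cls A g := by rw [hσ]; exact ⟨u, hu, rfl⟩
    have h2 : σ u ∈ X := hPX _ (aut_mem σ huP) (fun h => hXH u hu ((aut_mem_iff σ).mp h))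
    rw [← cls_eq h1, cls_eq h2]
  rw [hall g hg]
  ext a
  refine ⟨hXH a, fun ha => ?_⟩
  rw [← hall a ha]
  exact mem_cls A a

end TypeB

/-! ### The maximal subgroup is an A-subgroup -/

section TypeA

variable {G : Type*} [CommGroup G] [Finite G] [IsCyclic G]

/-- The stabilizer in `Aut(G)` of the basic set containing `x`. -/
def stab (A : SRing G) (x : G) : Subgroup (MulAut G) where
  carrier := {σ | σ x ∈ cls A x}
  one_mem' := mem_cls A x
  mul_mem' := fun {σ τ} hσ hτ => aut_stab (σ := σ) (mem_cls A x) hσ hτ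
  inv_mem' := fun {σ} hσ => by
    have h1 := mem_cls_aut σ⁻¹ (g := σ x) (h := x) (by
      have h2 : cls A (σ x) = cls A x := cls_eq hσ
      rw [h2]; exact mem_cls A x)
    simpa using h1

lemma mem_stab {A : SRing G} {x : G} {σ : MulAut G} : σ ∈ stab A x ↔ σ x ∈ cls A x := Iff.rfl

lemma stab_apply_mem {A : SRing G} {x y : G} {σ : MulAut G} (hσ : σ ∈ stab A x)
    (hy : y ∈ cls A x) : σ y ∈ cls A x := aut_stab (mem_cls A x) hσ hy

variable {p k : ℕ} (hp : p.Prime) (hc : Nat.card G = p ^ k) (hk : 1 ≤ k)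
variable {x : G} (hx : x ∉ Phi p G)
include hp hc hk hx

lemma exists_zpow_gen (g : G) : ∃ n : ℤ, x ^ n = g := by
  have hg : g ∈ Subgroup.zpowers x := by rw [zpowers_of_notMem_Phi hp hc hk hx]; trivial
  exact Subgroup.mem_zpowers_iff.mp hg

lemma aut_div_mem {σ τ : MulAut G} {K : Subgroup G} (h : σ x * (τ x)⁻¹ ∈ K) (g : G) :
    σ g * (τ g)⁻¹ ∈ K := by
  obtain ⟨n, rfl⟩ := exists_zpow_gen hp hc hk hx g
  have : σ (x ^ n) * (τ (x ^ n))⁻¹ = (σ x * (τ x)⁻¹) ^ n := by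
    rw [map_zpow, map_zpow, mul_zpow, inv_zpow]
  rw [this]
  exact zpow_mem h n

variable {A : SRing G} (hΦ : AClosed A (Phi p G : Set G))
include hΦ

lemma mem_cls_gen_iff {y : G} : y ∈ cls A x ↔ ∃ σ ∈ stab A x, σ x = y := by
  constructor
  · intro hy
    have hyP : y ∉ Phi p G := fun h => hx ((hΦ.mem_iff hy).mp h)
    obtain ⟨σ, rfl⟩ := exists_aut_of_gen hp hc hk hx hyP
    exact ⟨σ, hy, rfl⟩
  · rintro ⟨σ, hσ, rfl⟩
    exact hσ

/-- If the maximal subgroup is an `A`-subgroup, all basic sets outside it are orbits of the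
stabilizer of any one of them, because `Aut(G)` is abelian and transitive on generators. -/
lemma mem_cls_iff_of_notMem {g y : G} (hg : g ∉ Phi p G) :
    y ∈ cls A g ↔ ∃ σ ∈ stab A x, σ g = y := by
  obtain ⟨τ, rfl⟩ := exists_aut_of_gen hp hc hk hx hg
  rw [cls_aut]
  constructor
  · rintro ⟨z, hz, rfl⟩
    obtain ⟨σ, hσ, rfl⟩ := (mem_cls_gen_iff hp hc hk hx hΦ).mp hz
    exact ⟨σ, hσ, aut_comm _ _ _⟩
  · rintro ⟨σ, hσ, rfl⟩
    exact ⟨σ x, hσ, aut_comm _ _ _⟩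

/-- Elements of the stabilizer of a highest basic set acting trivially modulo `Phi` act trivially
modulo the radical. -/
lemma stab_mod_Rad (hodd : Odd p) {σ : MulAut G} (hσ : σ ∈ stab A x)
    (h : σ x * x⁻¹ ∈ Phi p G) (g : G) : σ g * g⁻¹ ∈ Rad (cls A x) := by
  refine aut_div_mem hp hc hk hx (σ := σ) (τ := 1) ?_ g
  simp only [MulAut.one_apply]
  apply mem_Rad_of
  intro y hy
  obtain ⟨β, hβ, rfl⟩ := (mem_cls_gen_iff hp hc hk hx hΦ).mp hy
  have h1 : x * β⁻¹ (σ x * x⁻¹) ∈ cls A x :=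
    orbit_coset_aut hp hc hodd hx h (fun b hb => stab_apply_mem hσ hb) (mem_cls A x)
      (aut_mem β⁻¹ (Subgroup.mem_zpowers _))
  have h2 := stab_apply_mem hβ h1
  rw [map_mul, MulAut.apply_inv_self, mul_comm] at h2
  exact h2

lemma stab_mod_Rad' (hodd : Odd p) {σ τ : MulAut G} (hσ : σ ∈ stab A x) (hτ : τ ∈ stab A x)
    (h : σ x * (τ x)⁻¹ ∈ Phi p G) (g : G) : σ g * (τ g)⁻¹ ∈ Rad (cls A x) := by
  have h1 : (τ⁻¹ * σ) x * x⁻¹ ∈ Phi p G := by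
    have := aut_mem τ⁻¹ h
    rwa [map_mul, map_inv, MulAut.inv_apply_self] at this
  have h2 := aut_mem τ (stab_mod_Rad hp hc hk hx hΦ hodd (mul_mem (inv_mem hτ) hσ) h1 g)
  rwa [map_mul, map_inv, MulAut.mul_apply, MulAut.apply_inv_self] at h2

/-- Modulo the radical of the highest basic sets, every basic set is an orbit of their
stabilizer. -/
lemma cls_mod_Rad (hodd : Odd p) (y : G) {y' : G} (hy' : y' ∈ cls A y) :
    ∃ σ ∈ stab A x, y' * (σ y)⁻¹ ∈ Rad (cls A x) := by
  by_cases hy : y ∈ Phi p G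
  · have hyx : y * x ∉ Phi p G := fun h => hx ((Subgroup.mul_mem_cancel_left _ hy).mp h)
    have h1 := cls_mul_subset (A := A) (y * x) x⁻¹
    rw [mul_inv_cancel_right, cls_inv] at h1
    obtain ⟨a, ha, b, hb, hab⟩ := h1 hy'
    obtain ⟨σ, hσ, rfl⟩ := (mem_cls_iff_of_notMem hp hc hk hx hΦ hyx).mp ha
    obtain ⟨τ, hτ, hτb⟩ := (mem_cls_gen_iff hp hc hk hx hΦ).mp hb
    simp only at hab
    have h2 : y' * (σ y)⁻¹ = σ x * (τ x)⁻¹ := by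
      rw [hτb, inv_inv, ← hab, map_mul]
      rw [mul_right_comm, mul_right_comm (σ y), mul_inv_cancel, one_mul]
    refine ⟨σ, hσ, ?_⟩
    rw [h2]
    refine stab_mod_Rad' hp hc hk hx hΦ hodd hσ hτ ?_ x
    rw [← h2]
    exact mul_mem ((hΦ.mem_iff hy').mpr hy) (inv_mem (aut_mem σ hy))
  · obtain ⟨σ, hσ, rfl⟩ := (mem_cls_iff_of_notMem hp hc hk hx hΦ hy).mp hy'
    exact ⟨σ, hσ, by simp⟩

lemma cls_mod_Rad' (hodd : Odd p) (y : G) {σ : MulAut G} (hσ : σ ∈ stab A x) :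
    ∃ y' ∈ cls A y, σ y * y'⁻¹ ∈ Rad (cls A x) := by
  by_cases hy : y ∈ Phi p G
  · have hyx : y * x ∉ Phi p G := fun h => hx ((Subgroup.mul_mem_cancel_left _ hy).mp h)
    have h1 : σ (y * x) ∈ cls A (y * x) :=
      (mem_cls_iff_of_notMem hp hc hk hx hΦ hyx).mpr ⟨σ, hσ, rfl⟩
    obtain ⟨y', hy', b, hb, hab⟩ := cls_mul_subset y x h1
    obtain ⟨τ, hτ, rfl⟩ := (mem_cls_gen_iff hp hc hk hx hΦ).mp hb
    simp only [map_mul] at hab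
    have h2 : σ y * y'⁻¹ = τ x * (σ x)⁻¹ := by
      rw [mul_inv_eq_iff_eq_mul, mul_right_comm, mul_comm (τ x), hab, mul_inv_cancel_right]
    refine ⟨y', hy', ?_⟩
    rw [h2]
    refine stab_mod_Rad' hp hc hk hx hΦ hodd hτ hσ ?_ x
    rw [← h2]
    exact mul_mem (aut_mem σ hy) (inv_mem ((hΦ.mem_iff hy').mpr hy))
  · exact ⟨σ y, (mem_cls_iff_of_notMem hp hc hk hx hΦ hy).mpr ⟨σ, hσ, rfl⟩, by simp⟩

/-- If moreover the highest basic sets have trivial radical, then `A` is cyclotomic. -/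
lemma mem_cls_iff_of_Rad_bot (hodd : Odd p) (hL : Rad (cls A x) = ⊥) {g y : G} :
    y ∈ cls A g ↔ ∃ σ ∈ stab A x, σ g = y := by
  constructor
  · intro hy
    obtain ⟨σ, hσ, h⟩ := cls_mod_Rad hp hc hk hx hΦ hodd g hy
    rw [hL, Subgroup.mem_bot, mul_inv_eq_one] at h
    exact ⟨σ, hσ, h.symm⟩
  · rintro ⟨σ, hσ, rfl⟩
    obtain ⟨y', hy', h⟩ := cls_mod_Rad' hp hc hk hx hΦ hodd g hσ
    rw [hL, Subgroup.mem_bot, mul_inv_eq_one] at h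
    rwa [h]

/-- With trivial radical, the stabilizer of a highest basic set acts faithfully on `G / Phi`. -/
lemma stab_eq_one (hodd : Odd p) (hL : Rad (cls A x) = ⊥) {σ : MulAut G} (hσ : σ ∈ stab A x)
    (h : σ x * x⁻¹ ∈ Phi p G) : σ = 1 := by
  ext g
  have := stab_mod_Rad hp hc hk hx hΦ hodd hσ h g
  rwa [hL, Subgroup.mem_bot, mul_inv_eq_one] at this

omit hΦ

/-- Coordinate modulo the maximal subgroup: a homomorphism to `ZMod p` with kernel `Phi`,
normalized at `x`. -/
lemma exists_ell : ∃ ℓ : G → ZMod p, (∀ g h, ℓ (g * h) = ℓ g + ℓ h) ∧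
    (∀ g, ℓ g = 0 ↔ g ∈ Phi p G) ∧ ℓ x = 1 := by
  have := Fact.mk hp
  have hdvd : p ∣ Nat.card G := by rw [hc]; exact dvd_pow_self p (by omega)
  let e := (zmodCyclicMulEquiv (G := G) inferInstance).symm
  let φ : G → ZMod p := fun g => ZMod.castHom hdvd (ZMod p) (Multiplicative.toAdd (e g))
  have hφ : ∀ g h, φ (g * h) = φ g + φ h := by
    intro g h
    simp only [φ, map_mul, toAdd_mul, map_add]
  have hφ1 : φ 1 = 0 := by simp [φ]
  let φh : G →* Multiplicative (ZMod p) :=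
    { toFun := fun g => Multiplicative.ofAdd (φ g)
      map_one' := by rw [hφ1]; rfl
      map_mul' := fun g h => by rw [hφ]; rfl }
  have hker : φh.ker = Phi p G := by
    apply le_antisymm
    · apply le_Phi hp hc hk
      intro htop
      obtain ⟨a, ha⟩ := ZMod.castHom_surjective hdvd (1 : ZMod p)
      have h1 : e.symm (Multiplicative.ofAdd a) ∈ φh.ker := by rw [htop]; trivial
      rw [MonoidHom.mem_ker] at h1
      have h2 : φ (e.symm (Multiplicative.ofAdd a)) = 0 := h1
      simp only [φ, MulEquiv.apply_symm_apply, toAdd_ofAdd] at h2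
      rw [ha] at h2
      exact one_ne_zero h2
    · rintro _ ⟨z, rfl⟩
      rw [MonoidHom.mem_ker, powMonoidHom_apply, map_pow]
      have : ∀ a : Multiplicative (ZMod p), a ^ p = 1 := by
        intro a
        apply Multiplicative.toAdd.injective
        rw [toAdd_pow]
        simp
      exact this _
  have hφ0 : ∀ g, φ g = 0 ↔ g ∈ Phi p G := by
    intro g
    rw [← hker, MonoidHom.mem_ker]
    exact Iff.rfl
  have hx0 : φ x ≠ 0 := fun h => hx ((hφ0 x).mp h)
  refine ⟨fun g => (φ x)⁻¹ * φ g, ?_, ?_, ?_⟩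
  · intro g h
    simp only [hφ, mul_add]
  · intro g
    simp [hx0, hφ0]
  · exact inv_mul_cancel₀ hx0

variable {ℓ : G → ZMod p} (hℓ : ∀ g h, ℓ (g * h) = ℓ g + ℓ h)
  (hℓ0 : ∀ g, ℓ g = 0 ↔ g ∈ Phi p G) (hℓx : ℓ x = 1)
include hℓ hℓ0 hℓx

omit hx hp hc hk hℓ0 hℓx [IsCyclic G] in
lemma ell_zpow (g : G) (n : ℤ) : ℓ (g ^ n) = n * ℓ g := by
  let φh : G →* Multiplicative (ZMod p) := MonoidHom.mk' (fun g => Multiplicative.ofAdd (ℓ g))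
    (fun g h => by rw [hℓ]; rfl)
  have := map_zpow φh g n
  have h2 := congrArg Multiplicative.toAdd this
  rw [toAdd_zpow, zsmul_eq_mul] at h2
  exact h2

lemma ell_aut (σ : MulAut G) (g : G) : ℓ (σ g) = ℓ (σ x) * ℓ g := by
  obtain ⟨n, rfl⟩ := exists_zpow_gen hp hc hk hx g
  rw [map_zpow, ell_zpow hℓ, ell_zpow hℓ, hℓx, mul_one, mul_comm]

lemma ell_eq_iff (g h : G) : ℓ g = ℓ h ↔ g * h⁻¹ ∈ Phi p G := by
  rw [← hℓ0, hℓ]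
  have : ℓ h⁻¹ = - ℓ h := by simpa using ell_zpow hℓ h (-1)
  rw [this, ← sub_eq_add_neg, sub_eq_zero]

/-- The action of an automorphism on `G / Phi`, as a residue modulo `p`. -/
def chi : MulAut G →* ZMod p where
  toFun σ := ℓ (σ x)
  map_one' := hℓx
  map_mul' σ τ := by rw [MulAut.mul_apply, ell_aut hp hc hk hx hℓ hℓ0 hℓx σ (τ x)]

include hΦ

lemma chi_injOn (hodd : Odd p) (hL : Rad (cls A x) = ⊥) {σ τ : MulAut G} (hσ : σ ∈ stab A x)
    (hτ : τ ∈ stab A x) (h : ℓ (σ x) = ℓ (τ x)) : σ = τ := by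
  rw [ell_eq_iff hp hc hk hx hℓ hℓ0 hℓx] at h
  refine aut_ext_gen hp hc hk hx ?_
  have := stab_mod_Rad' hp hc hk hx hΦ hodd hσ hτ h x
  rwa [hL, Subgroup.mem_bot, mul_inv_eq_one] at this

lemma card_stab_dvd (hodd : Odd p) (hL : Rad (cls A x) = ⊥) : Nat.card (stab A x) ∣ p - 1 := by
  have := Fact.mk hp
  let f : stab A x →* (ZMod p)ˣ :=
    ((chi hp hc hk hx hℓ hℓ0 hℓx).comp (stab A x).subtype).toHomUnits
  have hf : Function.Injective f := by
    intro σ τ h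
    have h1 := congrArg Units.val h
    exact Subtype.ext (chi_injOn hp hc hk hx hΦ hℓ hℓ0 hℓx hodd hL σ.2 τ.2 h1)
  have := Subgroup.card_dvd_of_injective f hf
  rwa [Nat.card_eq_fintype_card (α := (ZMod p)ˣ), ZMod.card_units p] at this

end TypeA

/-- In a finite cyclic group, subgroups are determined by their orders. -/
lemma cyclic_subgroup_facts {C : Type*} [Group C] [Finite C] [IsCyclic C] :
    (∀ d, d ∣ Nat.card C → ∃ P : Subgroup C, Nat.card P = d) ∧
    (∀ H K : Subgroup C, Nat.card H ∣ Nat.card K → H ≤ K) := by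
  let _ : CommGroup C := IsCyclic.commGroup
  exact ⟨fun d hd => exists_subgroup_card hd, fun H K h => (le_iff_card_dvd H K).mpr h⟩

/-- `Aut(G)` is cyclic of order `p ^ (k - 1) (p - 1)`; its subgroup of order `p - 1` contains every
subgroup of order dividing `p - 1`. -/
lemma exists_K0 {p k : ℕ} (hp : p.Prime) (hodd : Odd p) {G : Type*} [CommGroup G] [Finite G]
    [IsCyclic G] (hc : Nat.card G = p ^ k) (hk : 1 ≤ k) :
    ∃ K₀ : Subgroup (MulAut G), Nat.card K₀ = p - 1 ∧
      (∀ K₁ : Subgroup (MulAut G), Nat.card K₁ = p - 1 → K₁ = K₀) ∧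
      ∀ K : Subgroup (MulAut G), Nat.card K ∣ p - 1 → K ≤ K₀ := by
  have hcyc : IsCyclic (MulAut G) := by
    have h1 : IsCyclic (ZMod (p ^ k))ˣ :=
      ZMod.isCyclic_units_of_prime_pow p hp (by rintro rfl; exact absurd hodd (by decide)) k
    rw [← hc] at h1
    exact isCyclic_of_surjective (IsCyclic.mulAutMulEquiv G).symm
      (IsCyclic.mulAutMulEquiv G).symm.surjective
  have hfin : Finite (MulAut G) :=
    Finite.of_injective (fun σ : MulAut G => (σ : G → G)) DFunLike.coe_injective
  have hcard : p - 1 ∣ Nat.card (MulAut G) := by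
    rw [IsCyclic.card_mulAut, hc, Nat.totient_prime_pow hp hk]
    exact Dvd.intro_left _ rfl
  obtain ⟨h1, h2⟩ := cyclic_subgroup_facts (C := MulAut G)
  obtain ⟨K₀, hK₀⟩ := h1 _ hcard
  refine ⟨K₀, hK₀, fun K₁ hK₁ => le_antisymm (h2 _ _ ?_) (h2 _ _ ?_), fun K hK => h2 _ _ ?_⟩
  · rw [hK₀, hK₁]
  · rw [hK₀, hK₁]
  · rw [hK₀]; exact hK

/-! ### Maps of the prime field preserving differences up to roots of unity -/

section Poly

open Polynomial

variable {p : ℕ} [Fact p.Prime]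

lemma sum_zmod_pow {m : ℕ} (hm : 0 < m) :
    ∑ v : ZMod p, v ^ m = if p - 1 ∣ m then -1 else 0 := by
  have h1 := FiniteField.sum_pow_units (ZMod p) m
  rw [ZMod.card] at h1
  rw [← h1]
  have h2 : ∑ v : ZMod p, v ^ m = ∑ v ∈ Finset.univ.filter (fun v : ZMod p => v ≠ 0), v ^ m := by
    rw [Finset.sum_filter_of_ne]
    intro v _ hv h0
    exact hv (by rw [h0, zero_pow hm.ne'])
  rw [h2]
  symm
  refine Finset.sum_bij (fun u _ => (u : ZMod p)) ?_ ?_ ?_ ?_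
  · intro u _; simp
  · intro u _ v _ h; exact Units.ext h
  · intro v hv
    exact ⟨Units.mk0 v (by simpa using hv), Finset.mem_univ _, rfl⟩
  · intro u _; simp

/-- A map `F` of the prime field with `(F a - F b) ^ n = (a - b) ^ n` for all `a`, `b`, where
`2 n ≤ p - 1`, is affine. Every power `F ^ i` with `i ≤ n` is a polynomial function of degree at most
`n`; if `F` had degree `d ≥ 2`, the power `F ^ (n / d + 1)` would have a degree strictly between `n`
and `p`. -/
lemma affine_of_pow_sub {n : ℕ} (hn0 : 0 < n) (hn : 2 * n ≤ p - 1) (F : ZMod p → ZMod p)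
    (hF : ∀ a b, (F a - F b) ^ n = (a - b) ^ n) : ∃ s c : ZMod p, ∀ a, F a = s * a + c := by
  have hp1 := (Fact.out : p.Prime).one_lt
  have hinj : Function.Injective F := by
    intro a b hab
    have := hF a b
    rw [hab, sub_self, zero_pow hn0.ne', eq_comm, pow_eq_zero_iff hn0.ne', sub_eq_zero] at this
    exact this
  have hbij : Function.Bijective F := Finite.injective_iff_bijective.mp hinj
  obtain ⟨g, -, hg⟩ := Function.bijective_iff_has_inverse.mp hbij
  -- all powers of `F` up to the `n`-th are polynomials of degree at most `n`
  have key : ∀ i ≤ n, ∃ P : (ZMod p)[X], P.natDegree ≤ n ∧ ∀ a, P.eval a = F a ^ i := by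
    intro i hi
    set e := p - 1 - n + i with he
    set c : ZMod p := -((-1) ^ (n - i) * (n.choose i : ZMod p)) with hcdef
    have hc : c ≠ 0 := by
      rw [hcdef, neg_ne_zero, mul_ne_zero_iff]
      refine ⟨pow_ne_zero _ (by simp), ?_⟩
      rw [Ne, ZMod.natCast_eq_zero_iff]
      intro h
      have h1 : p ∣ n.factorial := by
        rw [← Nat.choose_mul_factorial_mul_factorial hi, mul_assoc]
        exact h.mul_right _
      have := ((Fact.out : p.Prime).dvd_factorial).mp h1
      omega
    -- the factor `v ^ e` extracts the coefficient of `v ^ (n - i)` in `(F a - v) ^ n`, since the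
    -- power sums over the field vanish for exponents not divisible by `p - 1`
    refine ⟨C c⁻¹ * ∑ v : ZMod p, C (v ^ e) * (X - C (g v)) ^ n, ?_, ?_⟩
    · refine (natDegree_C_mul_le _ _).trans (natDegree_sum_le_of_forall_le _ _ fun v _ => ?_)
      refine (natDegree_C_mul_le _ _).trans ?_
      rw [natDegree_pow, natDegree_X_sub_C, mul_one]
    · intro a
      simp only [eval_mul, eval_C, eval_finsetSum, eval_pow, eval_sub, eval_X]
      rw [inv_mul_eq_iff_eq_mul₀ hc]
      have h1 : ∀ v, (a - g v) ^ n = ∑ j ∈ Finset.range (n + 1),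
          F a ^ j * ((-1) ^ (n - j) * v ^ (n - j)) * (n.choose j : ZMod p) := by
        intro v
        rw [← hF, hg v, sub_eq_add_neg, add_pow]
        refine Finset.sum_congr rfl fun j _ => ?_
        rw [neg_pow v]
      simp only [h1, Finset.mul_sum]
      rw [Finset.sum_comm]
      rw [Finset.sum_eq_single i]
      · have h2 : ∀ v : ZMod p, v ^ e * (F a ^ i * ((-1) ^ (n - i) * v ^ (n - i)) *
            (n.choose i : ZMod p)) =
            ((-1) ^ (n - i) * (n.choose i : ZMod p) * F a ^ i) * v ^ (p - 1) := by
          intro v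
          have : p - 1 = e + (n - i) := by omega
          rw [this, pow_add]; ring
        simp only [h2]
        rw [← Finset.mul_sum, sum_zmod_pow (by omega), if_pos dvd_rfl, hcdef]
        ring
      · intro j hj hji
        have hj : j ≤ n := by simpa [Nat.lt_succ_iff] using hj
        have h2 : ∀ v : ZMod p, v ^ e * (F a ^ j * ((-1) ^ (n - j) * v ^ (n - j)) *
            (n.choose j : ZMod p)) =
            ((-1) ^ (n - j) * (n.choose j : ZMod p) * F a ^ j) * v ^ (e + (n - j)) := by
          intro v
          rw [pow_add]; ring
        simp only [h2]
        rw [← Finset.mul_sum, sum_zmod_pow (by omega), if_neg, mul_zero]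
        rintro ⟨t, ht⟩
        have : t = 1 := by
          have h3 : 0 < t := Nat.pos_of_ne_zero (by rintro rfl; omega)
          have h4 : t < 2 := by
            by_contra h5
            have : (p - 1) * 2 ≤ (p - 1) * t := Nat.mul_le_mul_left _ (by omega)
            omega
          omega
        subst this
        omega
      · intro h
        simp at h
        omega
  obtain ⟨P, hPd, hP⟩ := key 1 hn0
  simp only [pow_one] at hP
  by_cases hd : P.natDegree ≤ 1
  · refine ⟨P.coeff 1, P.coeff 0, fun a => ?_⟩
    rw [← hP, eq_X_add_C_of_natDegree_le_one hd]
    simp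
  · exfalso
    push Not at hd
    set d := P.natDegree with hddef
    have hi1 : n / d + 1 ≤ n := by
      have : n / d ≤ n / 2 := Nat.div_le_div_left hd (by norm_num)
      omega
    have hi2 : n < d * (n / d + 1) := by
      have h1 := Nat.div_add_mod n d
      have h2 := Nat.mod_lt n (show d > 0 by omega)
      rw [mul_add, mul_one]; omega
    have hi3 : d * (n / d + 1) < p := by
      have h1 := Nat.mul_div_le n d
      rw [mul_add, mul_one]; omega
    obtain ⟨Q, hQd, hQ⟩ := key _ hi1
    have hdeg : (P ^ (n / d + 1)).natDegree = d * (n / d + 1) := by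
      rw [natDegree_pow, mul_comm]
    have h0 : P ^ (n / d + 1) - Q = 0 := by
      refine eq_zero_of_natDegree_lt_card_of_eval_eq_zero _ Function.injective_id ?_ ?_
      · intro a
        simp only [id, eval_sub, eval_pow, hP, hQ, sub_self]
      · rw [ZMod.card]
        refine (natDegree_sub_le _ _).trans_lt ?_
        rw [hdeg]
        exact max_lt hi3 (by omega)
    rw [sub_eq_zero] at h0
    rw [← h0, hdeg] at hQd
    omega

end Poly

/-! ### Normality -/

section Normality

variable {G : Type*} [CommGroup G] [Finite G]

/-- `f` is an automorphism of `A`, expressed through the basic sets: `f` preserves the relation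
`g h⁻¹ ∈ X` for every basic set `X`. -/
def IsAuto (A : SRing G) (f : Equiv.Perm G) : Prop :=
  ∀ g h, f g * (f h)⁻¹ ∈ cls A (g * h⁻¹)

lemma isAuto_of_mem {A : SRing G} {f : Equiv.Perm G} (hf : f ∈ autSubgroup A) : IsAuto A f := by
  intro g h
  have h1 := hf (cls A (g * h⁻¹)) (cls_mem_parts A _)
  have h2 : (f h, f g) ∈ RSet (cls A (g * h⁻¹)) := by
    rw [← h1]
    exact ⟨(h, g), ⟨g * h⁻¹, mem_cls A _, by simp⟩, rfl⟩
  obtain ⟨y, hy, hyg⟩ := h2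
  simp only at hyg
  rw [hyg, mul_inv_cancel_right]
  exact hy

lemma IsAuto.mul {A : SRing G} {f f' : Equiv.Perm G} (hf : IsAuto A f) (hf' : IsAuto A f') :
    IsAuto A (f * f') := by
  intro g h
  have h1 := hf (f' g) (f' h)
  rw [cls_eq (hf' g h)] at h1
  exact h1

lemma IsAuto.inv {A : SRing G} {f : Equiv.Perm G} (hf : IsAuto A f) : IsAuto A f⁻¹ := by
  intro g h
  have h1 := hf (f⁻¹ g) (f⁻¹ h)
  have e : ∀ u, f (f⁻¹ u) = u := fun u => f.apply_symm_apply u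
  rw [e, e] at h1
  rw [cls_eq h1]
  exact mem_cls A _

lemma isAuto_mulRight (A : SRing G) (c : G) : IsAuto A (Equiv.mulRight c) := by
  intro g h
  have : Equiv.mulRight c g * (Equiv.mulRight c h)⁻¹ = g * h⁻¹ := by simp
  rw [this]
  exact mem_cls A _

variable [IsCyclic G]
variable {p k : ℕ} (hp : p.Prime) (hc : Nat.card G = p ^ k) (hk : 1 ≤ k)
variable {x : G} (hx : x ∉ Phi p G)
variable {A : SRing G} (hΦ : AClosed A (Phi p G : Set G)) (hodd : Odd p)
  (hL : Rad (cls A x) = ⊥)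
variable {ℓ : G → ZMod p} (hℓ : ∀ g h, ℓ (g * h) = ℓ g + ℓ h)
  (hℓ0 : ∀ g, ℓ g = 0 ↔ g ∈ Phi p G) (hℓx : ℓ x = 1)
include hp hc hk hx hΦ hodd hL

lemma isAuto_stab {σ : MulAut G} (hσ : σ ∈ stab A x) : IsAuto A σ.toEquiv := by
  intro g h
  have : σ.toEquiv g * (σ.toEquiv h)⁻¹ = σ (g * h⁻¹) := by simp
  rw [this]
  exact (mem_cls_iff_of_Rad_bot hp hc hk hx hΦ hodd hL).mpr ⟨σ, hσ, rfl⟩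

include hℓ hℓ0 hℓx

lemma IsAuto.exists_stab {f : Equiv.Perm G} (hf : IsAuto A f) (g h : G) :
    ∃ σ ∈ stab A x, f g * (f h)⁻¹ = σ (g * h⁻¹) ∧ ℓ (f g) - ℓ (f h) = ℓ (σ x) * (ℓ g - ℓ h) := by
  obtain ⟨σ, hσ, h1⟩ := (mem_cls_iff_of_Rad_bot hp hc hk hx hΦ hodd hL).mp (hf g h)
  refine ⟨σ, hσ, h1.symm, ?_⟩
  have hi : ∀ u v, ℓ (u * v⁻¹) = ℓ u - ℓ v := by
    intro u v
    have := hℓ (u * v⁻¹) v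
    rw [inv_mul_cancel_right] at this
    rw [this]; ring
  rw [← hi, ← h1, ell_aut hp hc hk hx hℓ hℓ0 hℓx, hi]

lemma ell_stab_ne_zero (σ : MulAut G) : ℓ (σ x) ≠ 0 := by
  rw [Ne, hℓ0, aut_mem_iff]
  exact hx

/-- An automorphism of `A` which shifts all residues modulo `Phi` by the same amount is a
translation. -/
lemma IsAuto.translation {f : Equiv.Perm G} (hf : IsAuto A f) {c : ZMod p}
    (hfc : ∀ g, ℓ (f g) = ℓ g + c) (g y : G) : f (g * y) = f g * y := by
  have := Fact.mk hp
  have key : ∀ g y, y ∉ Phi p G → f (g * y) = f g * y := by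
    intro g y hy
    obtain ⟨σ, hσ, h1, h2⟩ := hf.exists_stab hp hc hk hx hΦ hodd hL hℓ hℓ0 hℓx (g * y) g
    rw [hfc, hfc, hℓ] at h2
    have hy0 : ℓ y ≠ 0 := by rwa [Ne, hℓ0]
    have h3 : ℓ (σ x) = 1 := by
      apply mul_right_cancel₀ hy0
      linear_combination -h2
    have h4 : σ = 1 := chi_injOn hp hc hk hx hΦ hℓ hℓ0 hℓx hodd hL hσ (one_mem _)
      (by rw [h3, MulAut.one_apply, hℓx])
    rw [h4, MulAut.one_apply, mul_inv_eq_iff_eq_mul] at h1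
    rw [h1, mul_comm g y, mul_inv_cancel_right, mul_comm]
  by_cases hy : y ∈ Phi p G
  · have h1 : y * x ∉ Phi p G := fun h => hx ((Subgroup.mul_mem_cancel_left _ hy).mp h)
    have h2 := key g (y * x) h1
    rw [← mul_assoc, key (g * y) x hx, ← mul_assoc] at h2
    exact mul_right_cancel h2
  · exact key g y hy

lemma pow_ell_stab {σ : MulAut G} (hσ : σ ∈ stab A x) : ℓ (σ x) ^ Nat.card (stab A x) = 1 := by
  have h1 : (⟨σ, hσ⟩ : stab A x) ^ Nat.card (stab A x) = 1 := pow_card_eq_one'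
  have h2 : σ ^ Nat.card (stab A x) = 1 := congrArg Subtype.val h1
  have h3 := congrArg (chi hp hc hk hx hℓ hℓ0 hℓx) h2
  rw [map_pow, map_one] at h3
  exact h3

/-- The residues of the stabilizer are exactly the roots of unity of order `|stab A x|`. -/
lemma exists_stab_of_pow {s : ZMod p} (hs : s ^ Nat.card (stab A x) = 1) :
    ∃ σ ∈ stab A x, ℓ (σ x) = s := by
  classical
  have := Fact.mk hp
  have := Fintype.ofFinite (stab A x)
  set n := Nat.card (stab A x) with hn
  have hn0 : 0 < n := Nat.card_pos
  let S : Finset (ZMod p) := Finset.univ.image (fun σ : stab A x => ℓ (σ.1 x))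
  have hS : S.card = n := by
    rw [Finset.card_image_of_injective, Finset.card_univ, hn, Nat.card_eq_fintype_card]
    intro σ τ h
    exact Subtype.ext (chi_injOn hp hc hk hx hΦ hℓ hℓ0 hℓx hodd hL σ.2 τ.2 h)
  have hsub : S ⊆ Polynomial.nthRootsFinset n (1 : ZMod p) := by
    intro v hv
    obtain ⟨σ, -, rfl⟩ := Finset.mem_image.mp hv
    rw [Polynomial.mem_nthRootsFinset hn0]
    exact pow_ell_stab hp hc hk hx hΦ hodd hL hℓ hℓ0 hℓx σ.2
  have hle : (Polynomial.nthRootsFinset n (1 : ZMod p)).card ≤ n := by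
    rw [Polynomial.nthRootsFinset_def]
    exact (Multiset.toFinset_card_le _).trans (Polynomial.card_nthRoots n 1)
  have heq := Finset.eq_of_subset_of_card_le hsub (by rw [hS]; exact hle)
  have hsS : s ∈ S := by
    rw [heq, Polynomial.mem_nthRootsFinset hn0]; exact hs
  obtain ⟨σ, -, h⟩ := Finset.mem_image.mp hsS
  exact ⟨σ.1, σ.2, h⟩

/-- If a residue-affine automorphism has slope the residue of `σ`, then it is `σ` followed by a
translation. -/
lemma IsAuto.affine {f : Equiv.Perm G} (hf : IsAuto A f) {σ : MulAut G} (hσ : σ ∈ stab A x)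
    {c : ZMod p} (hfc : ∀ g, ℓ (f g) = ℓ (σ x) * ℓ g + c) (g y : G) :
    f (g * y) = f g * σ y := by
  have := Fact.mk hp
  have h0 := ell_stab_ne_zero hp hc hk hx hΦ hodd hL hℓ hℓ0 hℓx σ
  have h1 := (isAuto_stab hp hc hk hx hΦ hodd hL (inv_mem hσ)).mul hf
  have h2 := h1.translation hp hc hk hx hΦ hodd hL hℓ hℓ0 hℓx (c := ℓ (σ⁻¹ x) * c) (fun g => by
    have e1 : ℓ (σ⁻¹ x) * ℓ (σ x) = 1 := by
      rw [← ell_aut hp hc hk hx hℓ hℓ0 hℓx, MulAut.inv_apply_self, hℓx]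
    have e2 : ℓ (((σ⁻¹).toEquiv * f) g) = ℓ (σ⁻¹ (f g)) := rfl
    rw [e2, ell_aut hp hc hk hx hℓ hℓ0 hℓx, hfc]
    linear_combination (ℓ g) * e1) g y
  have h3 : σ⁻¹ (f (g * y)) = σ⁻¹ (f g) * y := h2
  have h4 := congrArg σ h3
  rwa [map_mul σ, MulAut.apply_inv_self, MulAut.apply_inv_self] at h4

/-- If the stabilizer is a proper subgroup of the group of residues, an automorphism of `A` acts on
`G / Phi` by a map preserving differences up to roots of unity, which is affine by
`affine_of_pow_sub`. -/
lemma IsAuto.small {f : Equiv.Perm G} (hf : IsAuto A f)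
    (hn : Nat.card (stab A x) ≠ p - 1) :
    ∃ σ ∈ stab A x, ∀ g y, f (g * y) = f g * σ y := by
  have := Fact.mk hp
  have hdvd := card_stab_dvd hp hc hk hx hΦ hℓ hℓ0 hℓx hodd hL
  set n := Nat.card (stab A x) with hnn
  have hn0 : 0 < n := Nat.card_pos
  have hp1 := hp.two_le
  have h2n : 2 * n ≤ p - 1 := by
    obtain ⟨m, hm⟩ := hdvd
    have : m ≠ 0 := by rintro rfl; omega
    have : m ≠ 1 := by rintro rfl; omega
    have : 2 ≤ m := by omega
    rw [hm]; nlinarith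
  have hpow : ∀ g h, (ℓ (f g) - ℓ (f h)) ^ n = (ℓ g - ℓ h) ^ n := by
    intro g h
    obtain ⟨σ, hσ, -, h2⟩ := hf.exists_stab hp hc hk hx hΦ hodd hL hℓ hℓ0 hℓx g h
    rw [h2, mul_pow, pow_ell_stab hp hc hk hx hΦ hodd hL hℓ hℓ0 hℓx hσ, one_mul]
  have hxv : ∀ a : ZMod p, ℓ (x ^ (a.val : ℤ)) = a := by
    intro a
    rw [ell_zpow hℓ, hℓx, mul_one]
    simp
  have hF : ∀ g, ℓ (f (x ^ ((ℓ g).val : ℤ))) = ℓ (f g) := by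
    intro g
    have := hpow (x ^ ((ℓ g).val : ℤ)) g
    rw [hxv, sub_self, zero_pow hn0.ne', pow_eq_zero_iff hn0.ne', sub_eq_zero] at this
    exact this
  obtain ⟨s, c, hsc⟩ := affine_of_pow_sub hn0 h2n (fun a => ℓ (f (x ^ (a.val : ℤ)))) (by
    intro a b
    simp only [hpow, hxv])
  have hfa : ∀ g, ℓ (f g) = s * ℓ g + c := by
    intro g
    rw [← hF, hsc]
  have hs : s ^ n = 1 := by
    have h1 := hpow x 1
    have : ℓ 1 = 0 := (hℓ0 1).mpr (one_mem _)
    rw [hfa, hfa, hℓx, this] at h1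
    simpa using h1
  obtain ⟨σ, hσ, rfl⟩ := exists_stab_of_pow hp hc hk hx hΦ hodd hL hℓ hℓ0 hℓx hs
  exact ⟨σ, hσ, hf.affine hp hc hk hx hΦ hodd hL hℓ hℓ0 hℓx hσ hfa⟩

/-- Automorphisms fixing `1` when the stabilizer is as large as possible. On `Phi` such an
automorphism agrees with some `σ` in the stabilizer. After composing with `σ⁻¹`, the result `f'` fixes
`Phi` pointwise; multiplying the `p` factorizations of an element `a` along the transversal
`{1} ∪ X` of `Phi`, with `X` the basic set of `x`, gives `f' a ^ p = a ^ p`, so that `f'` preserves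
residues. -/
lemma IsAuto.large {f : Equiv.Perm G} (hf : IsAuto A f) (hf1 : f 1 = 1)
    (hn : Nat.card (stab A x) = p - 1) (hk2 : 2 ≤ k) :
    ∃ σ ∈ stab A x, ∀ g y, f (g * y) = f g * σ y := by
  classical
  have := Fact.mk hp
  have hi : ∀ u v, ℓ (u * v⁻¹) = ℓ u - ℓ v := by
    intro u v
    have := hℓ (u * v⁻¹) v
    rw [inv_mul_cancel_right] at this
    rw [this]; ring
  have hℓ1 : ℓ 1 = 0 := (hℓ0 1).mpr (one_mem _)
  -- conjugates of translations by elements of `Phi` are translations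
  have hmul : ∀ h, ∀ z ∈ Phi p G, f (h * z) = f z * f h := by
    intro h z hz
    have hg := (hf.mul (isAuto_mulRight A z)).mul hf.inv
    have h1 := hg.translation hp hc hk hx hΦ hodd hL hℓ hℓ0 hℓx (c := 0) (fun g => by
      have e : ∀ u, f (f⁻¹ u) = u := fun u => f.apply_symm_apply u
      have e1 : (f * Equiv.mulRight z * f⁻¹) g = f (f⁻¹ g * z) := rfl
      obtain ⟨σ, hσ, -, h2⟩ :=
        hf.exists_stab hp hc hk hx hΦ hodd hL hℓ hℓ0 hℓx (f⁻¹ g * z) (f⁻¹ g)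
      rw [e, hℓ, (hℓ0 z).mpr hz] at h2
      rw [e1]
      linear_combination h2) 1 (f h)
    have e2 : ∀ u, (f * Equiv.mulRight z * f⁻¹) (f u) = f (u * z) := by
      intro u
      change f (f⁻¹ (f u) * z) = _
      rw [show f⁻¹ (f u) = u from f.symm_apply_apply u]
    have e3 := e2 1
    rw [hf1, one_mul] at e3
    rw [one_mul, e2, e3] at h1
    exact h1
  obtain ⟨σ, hσ, hσw, -⟩ := hf.exists_stab hp hc hk hx hΦ hodd hL hℓ hℓ0 hℓx (x ^ p) 1
  rw [hf1, inv_one, mul_one, mul_one] at hσw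
  have hw : x ^ p ∈ Phi p G := ⟨x, rfl⟩
  have hσΦ : ∀ z ∈ Phi p G, f z = σ z := by
    rintro _ ⟨y, rfl⟩
    have hy : y ∈ Subgroup.zpowers x := by rw [zpowers_of_notMem_Phi hp hc hk hx]; trivial
    rw [← mem_powers_iff_mem_zpowers] at hy
    obtain ⟨m, rfl⟩ := hy
    have : ∀ m : ℕ, f ((x ^ p) ^ m) = σ ((x ^ p) ^ m) := by
      intro m
      induction m with
      | zero => simp [hf1]
      | succ m ih => rw [pow_succ, hmul _ _ hw, ih, hσw, map_mul, mul_comm]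
    simp only [powMonoidHom_apply]
    rw [pow_right_comm]
    exact this m
  obtain ⟨f', hf'def⟩ : ∃ f' : Equiv.Perm G, f' = (σ⁻¹).toEquiv * f := ⟨_, rfl⟩
  have hf'a : ∀ g, f' g = σ⁻¹ (f g) := by intro g; rw [hf'def]; rfl
  have hf' : IsAuto A f' := by
    rw [hf'def]; exact (isAuto_stab hp hc hk hx hΦ hodd hL (inv_mem hσ)).mul hf
  have hf'1 : f' 1 = 1 := by rw [hf'a, hf1, map_one]
  have hf'z : ∀ h, ∀ z ∈ Phi p G, f' (h * z) = z * f' h := by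
    intro h z hz
    rw [hf'a, hf'a, hmul h z hz, hσΦ z hz, map_mul, MulAut.inv_apply_self]
  -- every nonzero residue occurs once in the basic set of `x`, which yields the transversal `tr`
  have hsurj : ∀ c : ZMod p, c ≠ 0 → ∃ σ ∈ stab A x, ℓ (σ x) = c := by
    intro c hc0
    apply exists_stab_of_pow hp hc hk hx hΦ hodd hL hℓ hℓ0 hℓx
    rw [hn]
    exact ZMod.pow_card_sub_one_eq_one hc0
  have htr : ∀ c : ZMod p, ∃ t : G, ℓ t = c ∧ (c = 0 → t = 1) ∧ (c ≠ 0 → t ∈ cls A x) := by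
    intro c
    by_cases hc0 : c = 0
    · exact ⟨1, by rw [hℓ1, hc0], fun _ => rfl, fun h => absurd hc0 h⟩
    · obtain ⟨τ, hτ, hτc⟩ := hsurj c hc0
      exact ⟨τ x, hτc, fun h => absurd h hc0, fun _ => hτ⟩
  choose tr htrℓ htr1 htrx using htr
  have htr0 : tr 0 = 1 := htr1 0 rfl
  have huniq : ∀ t ∈ cls A x, tr (ℓ t) = t := by
    intro t ht
    have htΦ : ℓ t ≠ 0 := by
      rw [Ne, hℓ0]
      exact fun h => hx ((hΦ.mem_iff ht).mp h)
    have h1 := htrx _ htΦ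
    obtain ⟨α, hα, h2⟩ := (mem_cls_gen_iff hp hc hk hx hΦ).mp h1
    obtain ⟨β, hβ, h3⟩ := (mem_cls_gen_iff hp hc hk hx hΦ).mp ht
    have : α = β := chi_injOn hp hc hk hx hΦ hℓ hℓ0 hℓx hodd hL hα hβ (by
      rw [h2, h3, htrℓ])
    rw [← h2, ← h3, this]
  have htrcls : ∀ c, ∀ t ∈ cls A (tr c), t = tr (ℓ t) := by
    intro c t ht
    by_cases hc0 : c = 0
    · rw [hc0, htr0, cls_one, Set.mem_singleton_iff] at ht
      rw [ht, hℓ1, htr0]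
    · rw [cls_eq (htrx c hc0)] at ht
      exact (huniq t ht).symm
  have hFtr : ∀ c, f' (tr c) = tr (ℓ (f' (tr c))) := by
    intro c
    apply htrcls c
    have := hf' (tr c) 1
    rwa [hf'1, inv_one, mul_one, mul_one] at this
  have hFinj : Function.Injective (fun c => ℓ (f' (tr c))) := by
    intro c d hcd
    simp only at hcd
    obtain ⟨τ, hτ, -, h2⟩ :=
      hf'.exists_stab hp hc hk hx hΦ hodd hL hℓ hℓ0 hℓx (tr c) (tr d)
    rw [hcd, sub_self, eq_comm, mul_eq_zero, htrℓ, htrℓ, sub_eq_zero] at h2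
    exact h2.resolve_left (ell_stab_ne_zero hp hc hk hx hΦ hodd hL hℓ hℓ0 hℓx τ)
  have hFbij : Function.Bijective (fun c => ℓ (f' (tr c))) :=
    Finite.injective_iff_bijective.mp hFinj
  set F : ZMod p ≃ ZMod p := Equiv.ofBijective _ hFbij with hFdef
  have hFapp : ∀ c, F c = ℓ (f' (tr c)) := fun c => rfl
  have hres : ∀ a, ℓ (f' a) = ℓ a + 0 := by
    intro a
    have hz : ∀ c, a * (tr c * tr (ℓ a - c))⁻¹ ∈ Phi p G := by
      intro c
      rw [← hℓ0, hi, hℓ, htrℓ, htrℓ]; ring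
    have e1 : ∀ c, a = tr c * tr (ℓ a - c) * (a * (tr c * tr (ℓ a - c))⁻¹) := by
      intro c; rw [mul_comm a, mul_inv_cancel_left]
    have e2 : ∀ c, f' a = tr (F c) * tr (ℓ (f' a) - F c) * (a * (tr c * tr (ℓ a - c))⁻¹) := by
      intro c
      set z := a * (tr c * tr (ℓ a - c))⁻¹ with hzdef
      have h1 : f' a = z * f' (tr c * tr (ℓ a - c)) := by
        conv_lhs => rw [e1 c]
        exact hf'z _ _ (hz c)
      have h2 := hf' (tr c * tr (ℓ a - c)) (tr c)
      rw [mul_comm (tr c), mul_inv_cancel_right, mul_comm _ (tr c)] at h2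
      have h3 := htrcls _ _ h2
      have h4 : ℓ (f' (tr c * tr (ℓ a - c))) = ℓ (f' a) := by
        rw [h1, hℓ, (hℓ0 z).mpr (hz c), zero_add]
      rw [hi, h4, ← hFapp c, hFtr, ← hFapp c, mul_inv_eq_iff_eq_mul] at h3
      conv_lhs => rw [h1, h3]
      rw [mul_comm z, mul_comm (tr (F c))]
    have e3 : ∏ c, tr (ℓ a - c) = ∏ c, tr c := (Equiv.subLeft (ℓ a)).prod_comp tr
    have e4 : ∏ c, tr (F c) = ∏ c, tr c := F.prod_comp tr
    have e5 : ∏ c, tr (ℓ (f' a) - F c) = ∏ c, tr c :=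
      (F.trans (Equiv.subLeft (ℓ (f' a)))).prod_comp tr
    have e6 : a ^ p = f' a ^ p := by
      have h1 : a ^ p = ∏ c : ZMod p, a := by rw [Finset.prod_const, Finset.card_univ, ZMod.card]
      have h2 : f' a ^ p = ∏ c : ZMod p, f' a := by
        rw [Finset.prod_const, Finset.card_univ, ZMod.card]
      rw [h1, h2, Finset.prod_congr rfl (fun c _ => e1 c),
        Finset.prod_congr (g := fun c => tr (F c) * tr (ℓ (f' a) - F c) *
          (a * (tr c * tr (ℓ a - c))⁻¹)) rfl (fun c _ => e2 c)]
      simp only [Finset.prod_mul_distrib]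
      rw [e3, e4, e5]
    have e7 : f' a * a⁻¹ ∈ Phi p G := by
      rw [mem_iff_orderOf_dvd]
      have h1 : orderOf (f' a * a⁻¹) ∣ p := by
        apply orderOf_dvd_of_pow_eq_one
        rw [mul_pow, inv_pow, e6, mul_inv_cancel]
      refine h1.trans ?_
      have h2 := card_Phi hp hc hk
      obtain ⟨m, rfl⟩ : ∃ m, k = m + 2 := ⟨k - 2, by omega⟩
      rw [pow_succ, mul_comm] at h2
      rw [Nat.eq_of_mul_eq_mul_right hp.pos h2, pow_succ]
      exact dvd_mul_left p _
    rw [add_zero, ← sub_eq_zero, ← hi, hℓ0]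
    exact e7
  refine ⟨σ, hσ, fun g y => ?_⟩
  have h1 := hf'.translation hp hc hk hx hΦ hodd hL hℓ hℓ0 hℓx hres g y
  rw [hf'a, hf'a] at h1
  have h2 := congrArg σ h1
  rwa [map_mul σ, MulAut.apply_inv_self, MulAut.apply_inv_self] at h2

omit hℓ hℓ0 hℓx in
/-- A cyclotomic S-ring with trivial radical is normal, unless it is the trivial S-ring over the
group of order `p`. -/
lemma isNormal_of_Rad_bot (h : Nat.card (stab A x) ≠ p - 1 ∨ 2 ≤ k) : IsNormalSRing A := by
  obtain ⟨ℓ, hℓ, hℓ0, hℓx⟩ := exists_ell hp hc hk hx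
  have main : ∀ f, IsAuto A f → ∃ σ : MulAut G, ∀ g y, f (g * y) = f g * σ y := by
    intro f hf
    by_cases hn : Nat.card (stab A x) = p - 1
    · have h1 := (isAuto_mulRight A (f 1)⁻¹).mul hf
      obtain ⟨σ, -, hσ⟩ := h1.large hp hc hk hx hΦ hodd hL hℓ hℓ0 hℓx (by simp) hn
        (h.resolve_left (fun h => h hn))
      refine ⟨σ, fun g y => ?_⟩
      have h2 : f (g * y) * (f 1)⁻¹ = f g * (f 1)⁻¹ * σ y := hσ g y
      rw [mul_inv_eq_iff_eq_mul] at h2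
      rw [h2, mul_right_comm, inv_mul_cancel_right]
    · obtain ⟨σ, -, hσ⟩ := hf.small hp hc hk hx hΦ hodd hL hℓ hℓ0 hℓx hn
      exact ⟨σ, hσ⟩
  intro f hf g
  obtain ⟨σ, hσ⟩ := main f (isAuto_of_mem hf)
  refine ⟨σ g, ?_⟩
  ext u
  change f (f⁻¹ u * g) = u * σ g
  rw [hσ, show f (f⁻¹ u) = u from f.apply_symm_apply u]

end Normality

/-! ### Restriction, extension and schurity -/

section Restriction

variable {G : Type*} [CommGroup G] [Finite G]

/-- The restriction of `A` to an `A`-subgroup `U`. -/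
noncomputable def restrict (A : SRing G) (U : Subgroup G) (hU : AClosed A (U : Set G)) :
    SRing U where
  parts := Set.range fun u : U => (Subtype.val ⁻¹' cls A (u : G) : Set U)
  nonempty_mem := by
    rintro _ ⟨u, rfl⟩
    exact ⟨u, mem_cls A _⟩
  exists_mem u := ⟨_, ⟨u, rfl⟩, mem_cls A _⟩
  eq_of_mem := by
    rintro _ ⟨u, rfl⟩ _ ⟨v, rfl⟩ w hu hv
    have h1 : cls A (w : G) = cls A (u : G) := cls_eq hu
    have h2 : cls A (w : G) = cls A (v : G) := cls_eq hv
    simp only [← h1, ← h2]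
  one_mem := by
    refine ⟨1, ?_⟩
    ext u
    simp [cls_one]
  inv_mem := by
    rintro _ ⟨u, rfl⟩
    refine ⟨u⁻¹, ?_⟩
    simp only [InvMemClass.coe_inv, cls_inv]
    rfl
  structConst_const := by
    have key : ∀ u v w : U, structConst (Subtype.val ⁻¹' cls A (u : G) : Set U)
        (Subtype.val ⁻¹' cls A (v : G) : Set U) w
          = structConst (cls A (u : G)) (cls A (v : G)) (w : G) := by
      intro u v w
      refine Nat.card_congr ⟨fun q => ⟨(q.1.1, q.1.2), q.2.1, q.2.2.1, ?_⟩,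
        fun q => ⟨(⟨q.1.1, hU _ u.2 q.2.1⟩, ⟨q.1.2, hU _ v.2 q.2.2.1⟩), q.2.1, q.2.2.1, ?_⟩,
        fun q => rfl, fun q => rfl⟩
      · have := q.2.2.2
        exact congrArg Subtype.val this
      · exact Subtype.ext q.2.2.2
    rintro _ ⟨u, rfl⟩ _ ⟨v, rfl⟩ _ ⟨t, rfl⟩ z hz z' hz'
    rw [key, key]
    exact A.structConst_const _ (cls_mem_parts A _) _ (cls_mem_parts A _) _ (cls_mem_parts A _)
      _ hz _ hz'

lemma mem_cls_restrict {A : SRing G} {U : Subgroup G} (hU : AClosed A (U : Set G)) {u v : U} :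
    v ∈ cls (restrict A U hU) u ↔ (v : G) ∈ cls A (u : G) := by
  rw [cls_eq_of_mem (A := restrict A U hU) (X := Subtype.val ⁻¹' cls A (u : G)) ⟨u, rfl⟩
    (mem_cls A _)]
  rfl

/-- The permutations of `G` that act on the cosets of `U` through elements of `K`, after
identifying each coset with `U` by a translation. -/
def extGroup (U : Subgroup G) (K : Subgroup (Equiv.Perm U)) (hK : ∀ u, Equiv.mulRight u ∈ K) :
    Subgroup (Equiv.Perm G) where
  carrier := {f | ∀ c : G, ∃ κ ∈ K, ∃ c' : G, ∀ u : U, f (c * u) = c' * κ u}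
  one_mem' := fun c => ⟨1, one_mem _, c, fun u => rfl⟩
  mul_mem' := by
    intro f f' hf hf' c
    obtain ⟨κ', hκ', c', h'⟩ := hf' c
    obtain ⟨κ, hκ, c'', h⟩ := hf c'
    refine ⟨κ * κ', mul_mem hκ hκ', c'', fun u => ?_⟩
    rw [Equiv.Perm.mul_apply, h', h]
    rfl
  inv_mem' := by
    intro f hf c
    obtain ⟨κ, hκ, c', h⟩ := hf (f⁻¹ c)
    refine ⟨κ⁻¹ * Equiv.mulRight (κ 1), mul_mem (inv_mem hκ) (hK _), f⁻¹ c, fun u => ?_⟩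
    have e : ∀ v, f (f⁻¹ v) = v := fun v => f.apply_symm_apply v
    have h1 := h 1
    rw [OneMemClass.coe_one, mul_one, e] at h1
    apply f.injective
    rw [e, h, Equiv.Perm.mul_apply]
    rw [show κ (κ⁻¹ (Equiv.mulRight (κ 1) u)) = Equiv.mulRight (κ 1) u from
      κ.apply_symm_apply _]
    simp only [Equiv.coe_mulRight, Subgroup.coe_mul]
    rw [mul_comm (u : G), ← mul_assoc, ← h1]

lemma mulRight_mem_extGroup {U : Subgroup G} {K : Subgroup (Equiv.Perm U)}
    (hK : ∀ u, Equiv.mulRight u ∈ K) (g : G) : Equiv.mulRight g ∈ extGroup U K hK :=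
  fun c => ⟨1, one_mem _, c * g, fun u => by simp [mul_right_comm]⟩

/-- Elements of `extGroup U K` fixing `1` restrict to elements of `K` on `U`. -/
lemma extGroup_restrict {U : Subgroup G} {K : Subgroup (Equiv.Perm U)}
    (hK : ∀ u, Equiv.mulRight u ∈ K) {f : Equiv.Perm G} (hf : f ∈ extGroup U K hK)
    (h1 : f 1 = 1) : ∃ κ ∈ K, κ 1 = 1 ∧ ∀ u : U, f u = κ u := by
  obtain ⟨κ, hκ, c', h⟩ := hf 1
  have h2 := h 1
  simp only [OneMemClass.coe_one, mul_one, h1] at h2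
  refine ⟨Equiv.mulRight (κ 1)⁻¹ * κ, mul_mem (hK _) hκ, by simp, fun u => ?_⟩
  have h3 := h u
  rw [one_mul] at h3
  rw [h3, eq_inv_of_mul_eq_one_left h2.symm]
  simp [mul_comm]

lemma extGroup_mem_iff {U : Subgroup G} {K : Subgroup (Equiv.Perm U)}
    (hK : ∀ u, Equiv.mulRight u ∈ K) {f : Equiv.Perm G} (hf : f ∈ extGroup U K hK)
    (h1 : f 1 = 1) (g : G) : f g ∈ U ↔ g ∈ U := by
  have key : ∀ f ∈ extGroup U K hK, f 1 = 1 → ∀ g ∈ U, f g ∈ U := by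
    intro f hf h1 g hg
    obtain ⟨κ, -, -, h⟩ := extGroup_restrict hK hf h1
    have := h ⟨g, hg⟩
    simp only at this
    rw [this]
    exact (κ _).2
  refine ⟨fun h => ?_, key f hf h1 g⟩
  have h2 := key f⁻¹ (inv_mem hf) (by
    rw [← h1]; exact (f.symm_apply_apply 1).trans h1.symm) _ h
  rwa [show f⁻¹ (f g) = g from f.symm_apply_apply g] at h2

end Restriction

section Schurity

/-- A section of the quotient map `G → G ⧸ U` as a map `G → G`, sending `U` to `1` and normalized
at a given element `g` outside `U`. -/
lemma exists_section {G : Type*} [CommGroup G] (U : Subgroup G) (g : G) :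
    ∃ t : G → G, (∀ v, v * (t v)⁻¹ ∈ U) ∧ (∀ v w, v * w⁻¹ ∈ U → t v = t w) ∧
      (∀ v ∈ U, t v = 1) ∧ (g ∉ U → t g = g) := by
  classical
  let s : G ⧸ U → G := fun q => if q = 1 then 1 else if q = (g : G ⧸ U) then g else q.out
  have hs : ∀ q, (s q : G ⧸ U) = q := by
    intro q
    simp only [s]
    split_ifs with h1 h2
    · rw [h1]; rfl
    · rw [h2]
    · exact Quotient.out_eq' q
  refine ⟨fun v => s v, fun v => ?_, fun v w h => ?_, fun v hv => ?_, fun hg => ?_⟩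
  · rw [mul_comm, ← QuotientGroup.eq, hs]
  · have : (w : G ⧸ U) = v := by rw [QuotientGroup.eq, mul_comm]; exact h
    simp only [this]
  · have : (v : G ⧸ U) = 1 := (QuotientGroup.eq_one_iff v).mpr hv
    simp [s, this]
  · have : (g : G ⧸ U) ≠ 1 := fun h => hg ((QuotientGroup.eq_one_iff g).mp h)
    simp [s, this]

universe u

variable {G : Type u} [CommGroup G] [Finite G] [IsCyclic G]

/-- The condition maintained in the inductive proof of schurity: `K` contains the translations,
the basic sets of `A` are the orbits of the stabilizer of `1` in `K`, and, if the maximal subgroup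
of `G` is an `A`-subgroup, then modulo the radical of a highest basic set all elements of `K` are
affine with linear part stabilizing this basic set. -/
structure SchurWitness (A : SRing G) (p k : ℕ) (K : Subgroup (Equiv.Perm G)) : Prop where
  trans : ∀ g, Equiv.mulRight g ∈ K
  orbit : ∀ g h, h ∈ cls A g ↔ ∃ f ∈ K, f 1 = 1 ∧ f g = h
  affine : 1 ≤ k → AClosed A (Phi p G : Set G) → ∃ x ∉ Phi p G, ∀ f ∈ K, ∃ σ ∈ stab A x,
    ∀ g h, f g * (f h)⁻¹ * (σ (g * h⁻¹))⁻¹ ∈ Rad (cls A x)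

variable {p k : ℕ} (hp : p.Prime) (hc : Nat.card G = p ^ k) (hk : 1 ≤ k)

include hp hc hk in
/-- Schurity when the elements outside the largest proper `A`-subgroup `H` form one basic set. -/
lemma schurWitness_compl {A : SRing G} {H : Subgroup G} (hH : IsMaxClosed A H) (hodd : Odd p)
    (hne : H ≠ Phi p G) {j : ℕ} {K : Subgroup (Equiv.Perm H)}
    (hK : SchurWitness (restrict A H hH.closed) p j K) :
    ∃ K' : Subgroup (Equiv.Perm G), SchurWitness A p k K' := by
  classical
  refine ⟨extGroup H K hK.trans, mulRight_mem_extGroup _, fun g g' => ?_, fun _ hcl => ?_⟩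
  swap
  · exact absurd (le_antisymm (le_Phi hp hc hk hH.ne_top)
      (hH.le_of _ hcl (Phi_ne_top hp hc hk))) hne
  constructor
  · intro hg'
    by_cases hg : g ∈ H
    · have hg'H : g' ∈ H := hH.closed g hg hg'
      obtain ⟨κ, hκ, h1, h2⟩ := (hK.orbit ⟨g, hg⟩ ⟨g', hg'H⟩).mp
        ((mem_cls_restrict hH.closed).mpr hg')
      have hin : ∀ u : H, Equiv.Perm.ofSubtype κ (u : G) = κ u := fun u =>
        Equiv.Perm.ofSubtype_apply_of_mem κ u.2
      refine ⟨Equiv.Perm.ofSubtype κ, fun c => ?_, ?_, ?_⟩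
      · by_cases hcH : c ∈ H
        · refine ⟨κ * Equiv.mulRight ⟨c, hcH⟩, mul_mem hκ (hK.trans _), 1, fun u => ?_⟩
          have := hin (u * ⟨c, hcH⟩)
          rw [one_mul, mul_comm]
          exact this
        · refine ⟨1, one_mem _, c, fun u => ?_⟩
          rw [Equiv.Perm.ofSubtype_apply_of_not_mem κ]
          · rfl
          · exact fun h => hcH ((Subgroup.mul_mem_cancel_right _ u.2).mp h)
      · have := hin 1
        rwa [h1] at this
      · have := hin ⟨g, hg⟩
        rwa [h2] at this
    · have hg'H : g' ∉ H := fun h => hg ((hH.closed.mem_iff hg').mp h)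
      -- exchange the cosets of `g` and `g'` by translations
      let π : Equiv.Perm (G ⧸ H) := Equiv.swap (g : G ⧸ H) (g' : G ⧸ H)
      let m : G ⧸ H → G := fun q =>
        if q = 1 then 1 else if q = (g : G ⧸ H) then g⁻¹ * g' else (q⁻¹ * π q).out
      have hg1 : (g : G ⧸ H) ≠ 1 := fun h => hg ((QuotientGroup.eq_one_iff g).mp h)
      have hg'1 : (g' : G ⧸ H) ≠ 1 := fun h => hg'H ((QuotientGroup.eq_one_iff g').mp h)
      have hm : ∀ q, q * (m q : G ⧸ H) = π q := by
        intro q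
        simp only [m]
        split_ifs with h1 h2
        · rw [h1, QuotientGroup.mk_one, mul_one]
          exact (Equiv.swap_apply_of_ne_of_ne hg1.symm hg'1.symm).symm
        · rw [h2, QuotientGroup.mk_mul, QuotientGroup.mk_inv, mul_inv_cancel_left]
          exact (Equiv.swap_apply_left _ _).symm
        · rw [show (((q⁻¹ * π q).out : G) : G ⧸ H) = q⁻¹ * π q from Quotient.out_eq' _,
            mul_inv_cancel_left]
      have hinj : Function.Injective (fun v : G => v * m (v : G ⧸ H)) := by
        intro v w hvw
        simp only at hvw
        have h1 := congrArg (QuotientGroup.mk : G → G ⧸ H) hvw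
        simp only [QuotientGroup.mk_mul, hm] at h1
        rw [π.injective h1] at hvw
        exact mul_right_cancel hvw
      refine ⟨Equiv.ofBijective _ (Finite.injective_iff_bijective.mp hinj), fun c => ?_, ?_, ?_⟩
      · refine ⟨1, one_mem _, c * m (c : G ⧸ H), fun u => ?_⟩
        have : ((c * (u : G) : G) : G ⧸ H) = c := by
          rw [eq_comm, QuotientGroup.eq, inv_mul_cancel_left]; exact u.2
        simp only [Equiv.ofBijective_apply, this, Equiv.Perm.one_apply, mul_right_comm]
      · simp [m]
      · simp [m, hg]
  · rintro ⟨f, hf, h1, rfl⟩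
    by_cases hg : g ∈ H
    · obtain ⟨κ, hκ, hκ1, h⟩ := extGroup_restrict hK.trans hf h1
      have h2 := (hK.orbit ⟨g, hg⟩ _).mpr ⟨κ, hκ, hκ1, rfl⟩
      have h3 := (mem_cls_restrict hH.closed).mp h2
      rw [← h] at h3
      exact h3
    · rw [cls_eq_compl hp hc hk hH hodd hne hg]
      exact fun h => hg ((extGroup_mem_iff hK.trans hf h1 g).mp h)

/-- The permutations of `G` which are affine modulo `L`, with linear part in `M`. -/
def affGroup (M : Subgroup (MulAut G)) (L : Subgroup G) : Subgroup (Equiv.Perm G) where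
  carrier := {f | ∃ σ ∈ M, ∀ g h, f g * (f h)⁻¹ * (σ (g * h⁻¹))⁻¹ ∈ L}
  one_mem' := ⟨1, one_mem _, fun g h => by simp⟩
  mul_mem' := by
    rintro f f' ⟨σ, hσ, h⟩ ⟨σ', hσ', h'⟩
    refine ⟨σ * σ', mul_mem hσ hσ', fun u v => ?_⟩
    have h1 := mul_mem (h (f' u) (f' v)) (aut_mem σ (h' u v))
    rw [map_mul σ _ (σ' _)⁻¹, map_inv σ (σ' _), ← mul_assoc, inv_mul_cancel_right] at h1
    exact h1
  inv_mem' := by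
    rintro f ⟨σ, hσ, h⟩
    refine ⟨σ⁻¹, inv_mem hσ, fun u v => ?_⟩
    have h1 := inv_mem (aut_mem σ⁻¹ (h (f⁻¹ u) (f⁻¹ v)))
    have e : ∀ v, f (f⁻¹ v) = v := fun v => f.apply_symm_apply v
    rw [map_mul, map_inv, MulAut.inv_apply_self, mul_inv_rev, inv_inv, e, e] at h1
    exact h1

section TypeA

variable {x : G} (hx : x ∉ Phi p G) {A : SRing G} (hΦ : AClosed A (Phi p G : Set G))
  (hodd : Odd p)
include hp hc hk hx hΦ hodd

lemma isMaxClosed_Phi : IsMaxClosed A (Phi p G) :=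
  ⟨hΦ, Phi_ne_top hp hc hk, fun _ _ h => le_Phi hp hc hk h⟩

/-- Elements of a group witnessing schurity of the restriction of `A` to `Phi` are automorphisms
of `Phi` modulo the radical of the highest basic sets of `A`. -/
lemma restrict_affine {j : ℕ} (hcU : Nat.card (Phi p G) = p ^ j)
    {K : Subgroup (Equiv.Perm (Phi p G))} (hK : SchurWitness (restrict A (Phi p G) hΦ) p j K)
    (hne : Rad (cls A x) ≠ Phi p G) :
    ∃ y : Phi p G, Subgroup.zpowers y = ⊤ ∧ ∀ κ ∈ K, κ 1 = 1 →
      ∃ τ : MulAut (Phi p G), τ y ∈ cls (restrict A (Phi p G) hΦ) y ∧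
        ∀ u, (κ u : G) * (τ u : G)⁻¹ ∈ Rad (cls A x) := by
  have hLU : Rad (cls A x) ≤ Phi p G :=
    Rad_le hp hc hk (isMaxClosed_Phi hp hc hk hx hΦ hodd) hx
  set L := Rad (cls A x) with hLdef
  have hj : 1 ≤ j := by
    by_contra hj
    obtain rfl : j = 0 := by omega
    rw [pow_zero, Subgroup.card_eq_one] at hcU
    rw [hcU] at hLU hne
    exact hne (le_bot_iff.mp hLU)
  have hLP : L.subgroupOf (Phi p G) ≤ Phi p (Phi p G) := by
    refine le_Phi hp hcU hj fun h => hne (le_antisymm hLU ?_)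
    exact Subgroup.subgroupOf_eq_top.mp h
  have hcl : AClosed (restrict A (Phi p G) hΦ) (Phi p (Phi p G) : Set (Phi p G)) := by
    rintro _ ⟨w, rfl⟩ z' hz'
    rw [mem_cls_restrict] at hz'
    obtain ⟨σ, -, h⟩ := cls_mod_Rad hp hc hk hx hΦ hodd _ hz'
    have h1 : (⟨_, hLU h⟩ : Phi p G) ∈ Phi p (Phi p G) := hLP h
    have h2 : (⟨σ w, aut_mem σ w.2⟩ : Phi p G) ^ p ∈ Phi p (Phi p G) := ⟨_, rfl⟩
    have h3 := mul_mem h1 h2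
    have h4 : z' = _ * _ := Subtype.ext (a1 := z') (a2 := (⟨_, hLU h⟩ : Phi p G) *
      (⟨σ w, aut_mem σ w.2⟩ : Phi p G) ^ p) (by simp)
    rw [SetLike.mem_coe, h4]
    exact h3
  obtain ⟨y, hy, haff⟩ := hK.affine hj hcl
  refine ⟨y, zpowers_of_notMem_Phi hp hcU hj hy, fun κ hκ hκ1 => ?_⟩
  have hL' : ∀ l ∈ Rad (cls (restrict A (Phi p G) hΦ) y), (l : G) ∈ L := by
    intro l hl
    have hlP : l ∈ Phi p (Phi p G) :=
      Rad_le hp hcU hj ⟨hcl, Phi_ne_top hp hcU hj, fun _ _ h => le_Phi hp hcU hj h⟩ hy hl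
    have h1 := mul_mem_of_mem_Rad hl (mem_cls _ y)
    rw [mem_cls_restrict] at h1
    obtain ⟨σ, hσ, h2⟩ := cls_mod_Rad hp hc hk hx hΦ hodd _ h1
    obtain ⟨m, -, hm⟩ := exists_pow_aut σ
    have hy1 : y ^ ((m : ℤ) - 1) ∈ Phi p (Phi p G) := by
      have h3 : (⟨_, hLU h2⟩ : Phi p G) ∈ Phi p (Phi p G) := hLP h2
      have h4 := mul_mem (inv_mem h3) hlP
      convert h4
      apply Subtype.ext
      simp only [Subgroup.coe_zpow, Subgroup.coe_mul, InvMemClass.coe_inv, hm]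
      rw [zpow_sub_one, zpow_natCast, mul_inv_rev, inv_inv, mul_inv_rev, mul_assoc,
        inv_mul_cancel_right]
    have hdvd : (p : ℤ) ∣ (m : ℤ) - 1 := by
      by_contra hnd
      obtain ⟨a, b, hab⟩ := (Nat.prime_iff_prime_int.mp hp).irreducible.coprime_iff_not_dvd.mpr hnd
      apply hy
      have h5 : y ^ (p : ℤ) ∈ Phi p (Phi p G) := by rw [zpow_natCast]; exact ⟨y, rfl⟩
      have h6 := mul_mem (zpow_mem h5 a) (zpow_mem hy1 b)
      rwa [← zpow_mul, ← zpow_mul, ← zpow_add, mul_comm (p : ℤ), mul_comm _ b, hab,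
        zpow_one] at h6
    have hσx : σ x * x⁻¹ ∈ Phi p G := by
      obtain ⟨q, hq⟩ := hdvd
      refine ⟨x ^ q, ?_⟩
      rw [powMonoidHom_apply, ← zpow_natCast, ← zpow_mul, mul_comm, ← hq, zpow_sub_one, hm,
        zpow_natCast]
    have h7 := mul_mem h2 (stab_mod_Rad hp hc hk hx hΦ hodd hσ hσx (y : G))
    rwa [Subgroup.coe_mul, ← mul_assoc, inv_mul_cancel_right, mul_inv_cancel_right] at h7
  obtain ⟨τ, hτ, h⟩ := haff κ hκ
  refine ⟨τ, hτ, fun u => ?_⟩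
  have h1 := hL' _ (h u 1)
  simpa [hκ1] using h1

omit hp hc hk hx hΦ hodd in
lemma aut_div_mem_restrict {L U : Subgroup G} {y : U} (hy : Subgroup.zpowers y = ⊤)
    {τ : MulAut U} {σ : MulAut G} (h : (τ y : G) * (σ y)⁻¹ ∈ L) (u : U) :
    (τ u : G) * (σ u)⁻¹ ∈ L := by
  have hu : u ∈ Subgroup.zpowers y := by rw [hy]; trivial
  obtain ⟨n, rfl⟩ := Subgroup.mem_zpowers_iff.mp hu
  have h1 := zpow_mem h n
  rw [mul_zpow, inv_zpow] at h1
  rwa [map_zpow, Subgroup.coe_zpow, Subgroup.coe_zpow, map_zpow]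

/-- Modulo the radical of the highest basic sets of `A`, the group `K` witnessing schurity on `Phi`
and the stabilizer of a highest basic set induce the same automorphisms of `Phi`. -/
lemma restrict_compat {j : ℕ} (hcU : Nat.card (Phi p G) = p ^ j)
    {K : Subgroup (Equiv.Perm (Phi p G))} (hK : SchurWitness (restrict A (Phi p G) hΦ) p j K) :
    (∀ κ ∈ K, κ 1 = 1 → ∃ σ ∈ stab A x, ∀ u, (κ u : G) * (σ u)⁻¹ ∈ Rad (cls A x)) ∧
    (∀ σ ∈ stab A x, ∃ κ ∈ K, κ 1 = 1 ∧ ∀ u, (κ u : G) * (σ u)⁻¹ ∈ Rad (cls A x)) := by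
  by_cases hne : Rad (cls A x) = Phi p G
  · rw [hne]
    exact ⟨fun κ _ _ => ⟨1, one_mem _, fun u => mul_mem (κ u).2 (inv_mem u.2)⟩,
      fun σ _ => ⟨1, one_mem _, rfl, fun u => mul_mem u.2 (inv_mem (aut_mem σ u.2))⟩⟩
  obtain ⟨y, hy, h⟩ := restrict_affine hp hc hk hx hΦ hodd hcU hK hne
  constructor
  · intro κ hκ hκ1
    obtain ⟨τ, hτ, h1⟩ := h κ hκ hκ1
    rw [mem_cls_restrict] at hτ
    obtain ⟨σ, hσ, h2⟩ := cls_mod_Rad hp hc hk hx hΦ hodd _ hτ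
    refine ⟨σ, hσ, fun u => ?_⟩
    have h3 := mul_mem (h1 u) (aut_div_mem_restrict hy h2 u)
    rwa [← mul_assoc, inv_mul_cancel_right] at h3
  · intro σ hσ
    obtain ⟨y', hy', h1⟩ := cls_mod_Rad' hp hc hk hx hΦ hodd (y : G) hσ
    have hy'U : y' ∈ Phi p G := hΦ _ y.2 hy'
    obtain ⟨κ, hκ, hκ1, hκy⟩ := (hK.orbit y ⟨y', hy'U⟩).mp ((mem_cls_restrict hΦ).mpr hy')
    refine ⟨κ, hκ, hκ1, fun u => ?_⟩
    obtain ⟨τ, hτ, h2⟩ := h κ hκ hκ1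
    have h3 := h2 y
    rw [hκy] at h3
    have h4 : (τ y : G) * (σ y)⁻¹ ∈ Rad (cls A x) := by
      have := inv_mem (mul_mem h1 h3)
      rwa [← mul_assoc, inv_mul_cancel_right, mul_inv_rev, inv_inv] at this
    have h5 := mul_mem (h2 u) (aut_div_mem_restrict hy h4 u)
    rwa [← mul_assoc, inv_mul_cancel_right] at h5

/-- Gluing: an automorphism `σ` stabilizing a highest basic set and a permutation `κ` of `Phi`
which agree modulo the radical combine to a permutation of `G` extending `κ` and sending a given
element `g` outside `Phi` to `σ g`. -/
lemma exists_glue {K : Subgroup (Equiv.Perm (Phi p G))} (hK : ∀ u, Equiv.mulRight u ∈ K)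
    {κ : Equiv.Perm (Phi p G)} (hκ : κ ∈ K) {σ : MulAut G} (hσ : σ ∈ stab A x)
    (h : ∀ u, (κ u : G) * (σ u)⁻¹ ∈ Rad (cls A x)) (hκ1 : κ 1 = 1) (g : G) :
    ∃ f ∈ extGroup (Phi p G) K hK ⊓ affGroup (stab A x) (Rad (cls A x)),
      (∀ u : Phi p G, f u = κ u) ∧ (g ∉ Phi p G → f g = σ g) := by
  obtain ⟨t, ht, htc, ht1, htg⟩ := exists_section (Phi p G) g
  let F : G → G := fun v => σ (t v) * κ ⟨v * (t v)⁻¹, ht v⟩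
  have hinj : Function.Injective F := by
    intro v w hvw
    have h1 : t v * (t w)⁻¹ ∈ Phi p G := by
      rw [← aut_mem_iff σ, map_mul, map_inv]
      have : σ (t v) * (σ (t w))⁻¹ =
          κ ⟨w * (t w)⁻¹, ht w⟩ * (κ ⟨v * (t v)⁻¹, ht v⟩ : G)⁻¹ := by
        rw [mul_inv_eq_iff_eq_mul, mul_right_comm, eq_mul_inv_iff_mul_eq, mul_comm _ (σ (t w))]
        exact hvw
      rw [this]
      exact mul_mem (κ _).2 (inv_mem (κ _).2)
    have h2 : v * w⁻¹ ∈ Phi p G := by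
      have := mul_mem (mul_mem (ht v) h1) (inv_mem (ht w))
      rwa [← mul_assoc, inv_mul_cancel_right, mul_inv_rev, inv_inv, ← mul_assoc,
        inv_mul_cancel_right] at this
    have h3 := htc v w h2
    simp only [F, h3] at hvw
    have h4 := κ.injective (Subtype.ext (mul_left_cancel hvw))
    exact mul_right_cancel (congrArg Subtype.val h4)
  refine ⟨Equiv.ofBijective F (Finite.injective_iff_bijective.mp hinj), ⟨fun c => ?_, σ, hσ, ?_⟩,
    fun u => ?_, fun hg => ?_⟩
  · refine ⟨κ * Equiv.mulRight ⟨c * (t c)⁻¹, ht c⟩, mul_mem hκ (hK _), σ (t c), fun u => ?_⟩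
    have e : t (c * u) = t c := htc _ _ (by
      rw [mul_comm c, mul_inv_cancel_right]; exact u.2)
    simp only [Equiv.ofBijective_apply, F, e, Equiv.Perm.mul_apply, Equiv.coe_mulRight]
    congr 3
    apply Subtype.ext
    simp only [Subgroup.coe_mul]
    rw [mul_comm c, mul_assoc]
  · have key : ∀ v, F v * (σ v)⁻¹ ∈ Rad (cls A x) := by
      intro v
      have h1 := h ⟨v * (t v)⁻¹, ht v⟩
      simp only [map_mul, map_inv, mul_inv_rev, inv_inv] at h1
      rwa [mul_left_comm, ← mul_assoc] at h1
    intro v w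
    have h1 := mul_mem (key v) (inv_mem (key w))
    simp only [Equiv.ofBijective_apply, map_mul, map_inv]
    convert h1 using 1
    generalize F v = a, F w = b, σ v = c, σ w = d
    rw [mul_inv, mul_inv, inv_inv, mul_mul_mul_comm]
  · have e : t (u : G) = 1 := ht1 _ u.2
    simp [F, e]
  · have e : t g = g := htg hg
    have e2 : (⟨g * g⁻¹, by simp⟩ : Phi p G) = 1 := Subtype.ext (by simp)
    simp only [Equiv.ofBijective_apply, F, e, e2, hκ1, OneMemClass.coe_one, mul_one]

/-- Schurity when the maximal subgroup is an `A`-subgroup: the witness consists of the permutations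
which act on the cosets of `Phi` through `K` and are affine modulo the radical. -/
lemma schurWitness_Phi {j : ℕ} (hcU : Nat.card (Phi p G) = p ^ j)
    {K : Subgroup (Equiv.Perm (Phi p G))} (hK : SchurWitness (restrict A (Phi p G) hΦ) p j K) :
    ∃ K' : Subgroup (Equiv.Perm G), SchurWitness A p k K' := by
  obtain ⟨hα, hβ⟩ := restrict_compat hp hc hk hx hΦ hodd hcU hK
  refine ⟨extGroup (Phi p G) K hK.trans ⊓ affGroup (stab A x) (Rad (cls A x)),
    fun g => ⟨mulRight_mem_extGroup _ g, 1, one_mem _, fun u v => by simp⟩,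
    fun g g' => ⟨fun hg' => ?_, ?_⟩, fun _ _ => ⟨x, hx, fun f hf => hf.2⟩⟩
  · by_cases hg : g ∈ Phi p G
    · obtain ⟨κ, hκ, hκ1, h2⟩ := (hK.orbit ⟨g, hg⟩ ⟨g', hΦ g hg hg'⟩).mp
        ((mem_cls_restrict hΦ).mpr hg')
      obtain ⟨σ, hσ, h3⟩ := hα κ hκ hκ1
      obtain ⟨f, hf, hfu, -⟩ := exists_glue hp hc hk hx hΦ hodd hK.trans hκ hσ h3 hκ1 g
      refine ⟨f, hf, ?_, ?_⟩
      · have := hfu 1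
        rwa [hκ1] at this
      · have := hfu ⟨g, hg⟩
        rwa [h2] at this
    · obtain ⟨σ, hσ, rfl⟩ := (mem_cls_iff_of_notMem hp hc hk hx hΦ hg).mp hg'
      obtain ⟨κ, hκ, hκ1, h3⟩ := hβ σ hσ
      obtain ⟨f, hf, hfu, hfg⟩ := exists_glue hp hc hk hx hΦ hodd hK.trans hκ hσ h3 hκ1 g
      refine ⟨f, hf, ?_, hfg hg⟩
      have := hfu 1
      rwa [hκ1] at this
  · rintro ⟨f, ⟨hf, σ, hσ, hfσ⟩, h1, rfl⟩
    by_cases hg : g ∈ Phi p G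
    · obtain ⟨κ, hκ, hκ1, h⟩ := extGroup_restrict hK.trans hf h1
      have h2 := (hK.orbit ⟨g, hg⟩ _).mpr ⟨κ, hκ, hκ1, rfl⟩
      have h3 := (mem_cls_restrict hΦ).mp h2
      rw [← h] at h3
      exact h3
    · have h2 : σ g ∈ cls A g := (mem_cls_iff_of_notMem hp hc hk hx hΦ hg).mpr ⟨σ, hσ, rfl⟩
      have h3 := hfσ g 1
      rw [h1, inv_one, mul_one, mul_one,
        ← Rad_cls_eq hp hc hk (isMaxClosed_Phi hp hc hk hx hΦ hodd) hg hx] at h3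
      have h4 := mul_mem_of_mem_Rad h3 h2
      rwa [inv_mul_cancel_right] at h4

end TypeA

/-- Every S-ring over a cyclic group of odd prime power order is schurian. -/
lemma exists_schurWitness {p : ℕ} (hp : p.Prime) (hodd : Odd p) (k : ℕ) :
    ∀ (G : Type u) [CommGroup G] [Finite G] [IsCyclic G], Nat.card G = p ^ k → ∀ A : SRing G,
      ∃ K : Subgroup (Equiv.Perm G), SchurWitness A p k K := by
  induction k using Nat.strong_induction_on with
  | _ k ih =>
    intro G _ _ _ hc A
    rcases Nat.eq_zero_or_pos k with rfl | hk
    · rw [pow_zero, Nat.card_eq_one_iff_unique] at hc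
      have := hc.1
      refine ⟨⊤, fun _ => trivial, fun g h => ?_, fun h => absurd h (by omega)⟩
      refine ⟨fun _ => ⟨1, trivial, rfl, Subsingleton.elim _ _⟩, fun _ => ?_⟩
      rw [Subsingleton.elim h g]
      exact mem_cls A g
    obtain ⟨H, hH⟩ := exists_maxClosed hp hc hk A
    obtain ⟨j, hjk, hj⟩ := card_subgroup_pow hp hc H
    have hlt : j < k := by
      refine lt_of_le_of_ne hjk fun h => hH.ne_top (Subgroup.eq_top_of_card_eq H ?_)
      rw [hj, hc, h]
    obtain ⟨K, hK⟩ := ih j hlt H hj (restrict A H hH.closed)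
    by_cases hne : H = Phi p G
    · subst hne
      obtain ⟨x, hx⟩ := exists_notMem_Phi hp hc hk
      exact schurWitness_Phi hp hc hk hx hH.closed hodd hj hK
    · exact schurWitness_compl hp hc hk hH hodd hne hK

end Schurity

/-! ### The trichotomy -/

section Trichotomy

variable {G : Type*} [CommGroup G] [Finite G] [IsCyclic G]
variable {p k : ℕ} (hp : p.Prime) (hc : Nat.card G = p ^ k) (hk : 1 ≤ k) (A : SRing G)
include hp hc hk

lemma isSchurian (hodd : Odd p) : IsSchurian A := by
  obtain ⟨K, hK⟩ := exists_schurWitness hp hodd k G hc A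
  refine ⟨K, hK.trans, ?_⟩
  rw [parts_eq]
  ext X
  have key : ∀ g, cls A g = {h : G | ∃ f ∈ K, f 1 = 1 ∧ f g = h} := fun g =>
    Set.ext fun h => hK.orbit g h
  simp only [Set.mem_range, Set.mem_ofPred_eq, key, eq_comm]

/-- The radical of any highest basic set, computed at a fixed generator. -/
lemma radSet_highest {x : G} (hx : x ∉ Phi p G) {X : Set G} (hX : X ∈ A.parts)
    (hh : IsHighest X) : radSet X = (Rad (cls A x) : Set G) := by
  obtain ⟨y, hy, hgen⟩ := hh
  have hyΦ : y ∉ Phi p G := fun h => Phi_ne_top hp hc hk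
    (eq_top_iff.mpr fun g _ => (Subgroup.zpowers_le.mpr h) (hgen g))
  obtain ⟨σ, rfl⟩ := exists_aut_of_gen hp hc hk hx hyΦ
  rw [radSet_eq, ← cls_eq_of_mem hX hy, cls_aut, Rad_aut]

/-- If all nontrivial elements lie in one basic set, then `A` has rank `2`. -/
lemma ncard_parts_eq_two (h : ∀ g : G, g ≠ 1 → cls A g = {1}ᶜ) : A.parts.ncard = 2 := by
  obtain ⟨x, hx⟩ := exists_notMem_Phi hp hc hk
  have hx1 : x ≠ 1 := fun h => hx (h ▸ one_mem _)
  have : A.parts = {{1}, {1}ᶜ} := by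
    rw [parts_eq]
    ext X
    simp only [Set.mem_range, Set.mem_insert_iff, Set.mem_singleton_iff]
    constructor
    · rintro ⟨g, rfl⟩
      by_cases hg : g = 1
      · left; rw [hg, cls_one]
      · right; exact h g hg
    · rintro (rfl | rfl)
      · exact ⟨1, cls_one A⟩
      · exact ⟨x, h x hx1⟩
  rw [this, Set.ncard_pair]
  intro h1
  have : (1 : G) ∈ ({1}ᶜ : Set G) := h1 ▸ rfl
  exact this rfl

/-- The theorem for a cyclic group carrying a commutative group structure. -/
theorem trichotomy_comm (hodd : Odd p) :
    IsSchurian A ∧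
    (((∀ X ∈ A.parts, IsHighest X → radSet X = {1}) ∧ A.parts.ncard = 2) ∨
     ((∀ X ∈ A.parts, IsHighest X → radSet X = {1}) ∧ IsNormalSRing A ∧
       ∃ K₀ : Subgroup (MulAut G), Nat.card K₀ = p - 1 ∧
         (∀ K₁ : Subgroup (MulAut G), Nat.card K₁ = p - 1 → K₁ = K₀) ∧
         ∃ K : Subgroup (MulAut G), K ≤ K₀ ∧ A.parts = cycParts K) ∨
     ((∀ X ∈ A.parts, IsHighest X → radSet X ≠ {1}) ∧
       ∃ U L : Subgroup G, L ≠ ⊥ ∧ U ≠ ⊤ ∧ IsSWreath A U L)) := by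
  refine ⟨isSchurian hp hc hk A hodd, ?_⟩
  obtain ⟨x, hx⟩ := exists_notMem_Phi hp hc hk
  obtain ⟨H, hH⟩ := exists_maxClosed hp hc hk A
  have hrad : ∀ X ∈ A.parts, IsHighest X → radSet X = (Rad (cls A x) : Set G) :=
    fun X hX hh => radSet_highest hp hc hk A hx hX hh
  by_cases hL : Rad (cls A x) = ⊥
  · have hrad1 : ∀ X ∈ A.parts, IsHighest X → radSet X = {1} := by
      intro X hX hh
      rw [hrad X hX hh, hL, Subgroup.coe_bot]
    by_cases hne : H = Phi p G
    · subst hne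
      have hΦ := hH.closed
      by_cases htriv : Nat.card (stab A x) ≠ p - 1 ∨ 2 ≤ k
      · right; left
        refine ⟨hrad1, isNormal_of_Rad_bot hp hc hk hx hΦ hodd hL htriv, ?_⟩
        obtain ⟨K₀, h1, h2, h3⟩ := exists_K0 hp hodd hc hk
        obtain ⟨ℓ, hℓ, hℓ0, hℓx⟩ := exists_ell hp hc hk hx
        refine ⟨K₀, h1, h2, stab A x,
          h3 _ (card_stab_dvd hp hc hk hx hΦ hℓ hℓ0 hℓx hodd hL), ?_⟩
        rw [parts_eq]
        ext X
        have key : ∀ g, cls A g = {h : G | ∃ f ∈ stab A x, f g = h} := fun g =>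
          Set.ext fun h => mem_cls_iff_of_Rad_bot hp hc hk hx hΦ hodd hL
        simp only [Set.mem_range, cycParts, Set.mem_ofPred_eq, key, eq_comm]
      · left
        push Not at htriv
        refine ⟨hrad1, ncard_parts_eq_two hp hc hk A fun g hg => ?_⟩
        obtain rfl : k = 1 := by omega
        have hbot : Phi p G = ⊥ := by
          rw [← Subgroup.card_eq_one]
          have := card_Phi hp hc hk
          rw [pow_one] at this
          exact Nat.eq_of_mul_eq_mul_left hp.pos (by rw [this, mul_one])
        -- the basic set of `x` has `p - 1` elements
        have hcls : cls A x = {1}ᶜ := by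
          refine Set.eq_of_subset_of_ncard_le ?_ ?_ (Set.toFinite _)
          · intro y hy h1
            rw [h1] at hy
            have := cls_eq hy
            rw [cls_one] at this
            have hx' := mem_cls A x
            rw [← this, Set.mem_singleton_iff] at hx'
            exact hx (hx' ▸ one_mem _)
          · have h1 : cls A x = Set.range (fun σ : stab A x => σ.1 x) := by
              ext y
              rw [mem_cls_gen_iff hp hc hk hx hΦ]
              simp
            have h2 : (cls A x).ncard = p - 1 := by
              rw [h1, ← htriv.1, ← Nat.card_coe_set_eq]
              refine Nat.card_range_of_injective fun σ τ h => Subtype.ext ?_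
              exact aut_ext_gen hp hc hk hx h
            rw [h2, Set.ncard_compl, Set.ncard_singleton, hc, pow_one]
        rw [← hcls]
        refine cls_eq ?_
        rw [hcls]
        exact hg
    · left
      refine ⟨hrad1, ncard_parts_eq_two hp hc hk A fun g hg => ?_⟩
      have hHbot : H = ⊥ := by
        rw [← Rad_eq_of_ne_Phi hp hc hk hH hodd hne hx, hL]
      have := cls_eq_compl hp hc hk hH hodd hne (g := g) (by rw [hHbot]; exact hg)
      rw [this, hHbot, Subgroup.coe_bot]
  · right; right
    refine ⟨fun X hX hh h => hL ?_, ?_⟩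
    · rw [hrad X hX hh] at h
      exact SetLike.coe_injective (h.trans Subgroup.coe_bot.symm)
    refine ⟨H, Rad (cls A x), hL, hH.ne_top, isASubgroup_of_closed hH.closed,
      isASubgroup_of_closed (closed_Rad x), Rad_le hp hc hk hH hx, inferInstance, ?_⟩
    intro X hX hXH
    obtain ⟨g, hg, hgH⟩ := Set.not_subset.mp hXH
    rw [radSet_eq, ← cls_eq_of_mem hX hg, Rad_cls_eq hp hc hk hH hgH hx]

end Trichotomy

end SRingPaper

open SRingPaper in
/-- every S-ring `A` over a cyclic group of odd prime-power order is
schurian, and either (1) `|rad(A)| = 1` and `rk(A) = 2`; or (2) `|rad(A)| = 1`,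
`A` is normal and `A = cyc(K, G)` for some `K ≤ K₀`, where `K₀` is the unique
subgroup of `Aut(G)` of order `p - 1`; or (3) `|rad(A)| > 1` and `A` is a proper
`S`-wreath product. -/
theorem sring_over_cyclic_p_group_trichotomy
    (p : ℕ) (hp : p.Prime) (hodd : Odd p)
    (G : Type*) [Group G] [Finite G] (hcyc : IsCyclic G)
    (hcard : ∃ k : ℕ, 1 ≤ k ∧ Nat.card G = p ^ k)
    (A : SRing G) :
    IsSchurian A ∧
    (((∀ X ∈ A.parts, IsHighest X → radSet X = {1}) ∧ A.parts.ncard = 2) ∨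
     ((∀ X ∈ A.parts, IsHighest X → radSet X = {1}) ∧ IsNormalSRing A ∧
       ∃ K₀ : Subgroup (MulAut G), Nat.card K₀ = p - 1 ∧
         (∀ K₁ : Subgroup (MulAut G), Nat.card K₁ = p - 1 → K₁ = K₀) ∧
         ∃ K : Subgroup (MulAut G), K ≤ K₀ ∧ A.parts = cycParts K) ∨
     ((∀ X ∈ A.parts, IsHighest X → radSet X ≠ {1}) ∧
       ∃ U L : Subgroup G, L ≠ ⊥ ∧ U ≠ ⊤ ∧ IsSWreath A U L)) := by
  obtain ⟨k, hk, hc⟩ := hcard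
  let _ : CommGroup G := IsCyclic.commGroup
  exact trichotomy_comm hp hc hk A hodd
end

section
/- Let p be an odd prime, G a cyclic p-group, and 𝒜 an S-ring over G with |rad(𝒜)| = 1 such that 𝒜 is normal and 𝒜 = cyc(K,G) for some subgroup K of the unique subgroup K₀ of Aut(G) of order p−1. Then Aut(𝒜) is a 2-isolated subgroup of Sym(G). -/
/-!
Write `Γ = Aut(A)` and let `K'` be 2-equivalent to `Γ`. Two groups with the same orbits on pairs
have the same orbit through every pair, so `K'` preserves every relation that is a union of
`Γ`-orbits, in particular every `R(X)` with `X` basic; hence `K' ≤ Γ` (`le_autSubgroup`).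

For the converse, fix a generator `x` of `G`. Since `A` is normal, an element of `Γ` fixing `1` is a
group automorphism of `G`, so it is trivial as soon as it also fixes `x`
(`eq_one_of_fixes_one_generator`): `(1, x)` is a base of `Γ`. Given `f ∈ Γ`, the pair
`(f 1, f x)` lies in the `K'`-orbit of `(1, x)`, so some `k ∈ K' ≤ Γ` agrees with `f` at `1` and `x`,
and therefore `f = k ∈ K'`.
-/

open scoped Pointwise

namespace SRingPaper

lemma TwoEquiv.orb2_eq {Ω : Type*} {K K' : Subgroup (Equiv.Perm Ω)} (h : TwoEquiv K K')
    (p : Ω × Ω) : orb2 K p = orb2 K' p := by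
  have hmem : orb2 K p ∈ {S : Set (Ω × Ω) | ∃ q, S = orb2 K' q} := h ▸ ⟨p, rfl⟩
  obtain ⟨q, hq⟩ := hmem
  have hp : p ∈ orb2 K' q := hq ▸ ⟨1, K.one_mem, rfl⟩
  obtain ⟨k, hk, rfl⟩ := hp
  rw [hq]
  ext r
  constructor
  · rintro ⟨f, hf, rfl⟩
    exact ⟨f * k⁻¹, K'.mul_mem hf (K'.inv_mem hk), by simp⟩
  · rintro ⟨f, hf, rfl⟩
    exact ⟨f * k, K'.mul_mem hf hk, by simp⟩

/-- `Aut(A)` is 2-closed: each `R(X)` is a union of its orbits on pairs, so any group with the same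
orbits on pairs also preserves each `R(X)`. -/
lemma le_autSubgroup {G : Type*} [Group G] [Finite G] (A : SRing G)
    {K' : Subgroup (Equiv.Perm G)} (h : TwoEquiv (autSubgroup A) K') : K' ≤ autSubgroup A := by
  have key : ∀ k ∈ K', ∀ X ∈ A.parts, ∀ q ∈ RSet X, (k q.1, k q.2) ∈ RSet X := by
    intro k hk X hX q hq
    have hmem : (k q.1, k q.2) ∈ orb2 K' q := ⟨k, hk, rfl⟩
    rw [← h.orb2_eq q] at hmem
    obtain ⟨f, hf, hfq⟩ := hmem
    rw [← hfq, ← hf X hX]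
    exact ⟨q, hq, rfl⟩
  intro k hk X hX
  apply Set.Subset.antisymm
  · rintro _ ⟨q, hq, rfl⟩
    exact key k hk X hX q hq
  · intro q hq
    exact ⟨_, key k⁻¹ (K'.inv_mem hk) X hX q hq, by simp⟩

/-- In a normal S-ring, an automorphism fixing `1` is multiplicative, hence is determined by its
value at a generator. -/
lemma eq_one_of_fixes_one_generator {G : Type*} [Group G] [Finite G] {A : SRing G}
    (hnorm : IsNormalSRing A) {x : G} (hx : ∀ g : G, g ∈ Subgroup.zpowers x)
    {f : Equiv.Perm G} (hf : f ∈ autSubgroup A) (h1 : f 1 = 1) (hfx : f x = x) : f = 1 := by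
  have hmul : ∀ a b : G, f (a * b) = f a * f b := by
    intro a b
    obtain ⟨g', hg'⟩ := hnorm f hf b
    have hconj : ∀ c : G, f (c * b) = f c * g' := by
      intro c
      simpa using DFunLike.congr_fun hg' (f c)
    have hb : f b = g' := by simpa [h1] using hconj 1
    rw [hconj a, hb]
  ext g
  obtain ⟨n, rfl⟩ := mem_powers_iff_mem_zpowers.mpr (hx g)
  induction n with
  | zero => simpa using h1
  | succ n ih =>
    simp only [Equiv.Perm.coe_one, id_eq] at ih ⊢
    rw [pow_succ, hmul, ih, hfx]

end SRingPaper

open SRingPaper in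
/-- if `A` is an S-ring over a cyclic group `G` of odd prime-power
order such that `|rad(A)| = 1`, `A` is normal, and `A = cyc(K, G)` for some
`K ≤ K₀` with `K₀` the unique subgroup of `Aut(G)` of order `p - 1`, then
`Aut(A)` is a 2-isolated subgroup of `Sym(G)`. -/
theorem aut_two_isolated
    (p : ℕ) (hp : p.Prime) (hodd : Odd p)
    (G : Type*) [Group G] [Finite G] (hcyc : IsCyclic G)
    (hcard : ∃ k : ℕ, 1 ≤ k ∧ Nat.card G = p ^ k)
    (A : SRing G)
    (hrad : ∀ X ∈ A.parts, IsHighest X → radSet X = {1})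
    (hnorm : IsNormalSRing A)
    (hcycA : ∃ K₀ : Subgroup (MulAut G), Nat.card K₀ = p - 1 ∧
      (∀ K₁ : Subgroup (MulAut G), Nat.card K₁ = p - 1 → K₁ = K₀) ∧
      ∃ K : Subgroup (MulAut G), K ≤ K₀ ∧ A.parts = cycParts K) :
    TwoIsolated (autSubgroup A) := by
  obtain ⟨x, hx⟩ := hcyc.exists_generator
  intro K' hK'
  have hle : K' ≤ autSubgroup A := le_autSubgroup A hK'
  refine le_antisymm hle fun f hf => ?_
  have hmem : (f 1, f x) ∈ orb2 (autSubgroup A) (1, x) := ⟨f, hf, rfl⟩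
  rw [hK'.orb2_eq] at hmem
  obtain ⟨k, hk, hkf⟩ := hmem
  obtain ⟨hk1, hkx⟩ := Prod.mk.inj hkf
  simp only at hk1 hkx
  have hone : k⁻¹ * f = 1 :=
    eq_one_of_fixes_one_generator hnorm hx
      ((autSubgroup A).mul_mem ((autSubgroup A).inv_mem (hle hk)) hf)
      (by simp [← hk1]) (by simp [← hkx])
  rwa [← inv_mul_eq_one.mp hone]
end

section
/- Let p be an odd prime, G a cyclic p-group, and 𝒜 an S-ring over G with |rad(𝒜)| = 1 such that 𝒜 is normal and 𝒜 = cyc(K,G) for some subgroup K of the unique subgroup K₀ of Aut(G) of order p−1. If φ is an algebraic isomorphism from 𝒜 to an S-ring 𝒜′ over a finite abelian group G′, then G′ is cyclic. -/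
/-!
The idea is Schur's theorem on multipliers, reduced modulo `p`. An algebraic isomorphism `φ`
identifies the coefficients of products of basic sets, hence (for any commutative coefficient ring)
the coefficients of `X̲ ^ n` on a basic set `Z` with those of `(φ X)̲ ^ n` on `φ Z`
(`Match.pow`). Modulo `p` the Frobenius map gives `X̲ ^ q = ∑ x ∈ X, x ^ q` for `q` a power of `p`.

Let `|G| = p ^ (m + 1)`, `q = p ^ m`, and let `X` be the `K`-orbit of a generator `g`. The
coefficient of `X̲ ^ q` at `g ^ q ≠ 1` is the number of `x ∈ X` with `x ^ q = g ^ q`. It is positive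
and at most `|X| ≤ |K| ≤ p - 1`, so it does not vanish modulo `p`. Transported to `G'`, this gives
`x' ∈ φ X` for which `x' ^ q` lies in a basic set other than `φ {1} = {1}`, so `x' ^ q ≠ 1`. Since
`|G'| = |G| = p ^ (m + 1)`, the element `x'` generates `G'`.
-/

open scoped Pointwise

namespace SRingPaper

open MonoidAlgebra

section Coefficients

variable {R : Type*} [CommRing R]

open Classical in
/-- The element `X̲ = ∑ x ∈ X, x` of the group algebra `R[G]`. -/
noncomputable def ind (R : Type*) [CommRing R] {G : Type*} [Finite G] (X : Set G) :
    MonoidAlgebra R G :=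
  ∑ x ∈ X.toFinite.toFinset, single x 1

open Classical in
lemma coeff_ind {G : Type*} [Finite G] (X : Set G) (z : G) :
    (ind R X).coeff z = if z ∈ X then 1 else 0 := by
  simp [ind, coeff_sum, coeff_single, Finsupp.single_apply]

lemma ind_one {G : Type*} [Group G] [Finite G] : ind R ({1} : Set G) = 1 := by
  ext z
  classical
  rw [coeff_ind, one_def, coeff_single, Finsupp.single_apply]
  simp [eq_comm]

lemma structConst_univ_one (G : Type*) [Group G] :
    structConst (Set.univ : Set G) Set.univ 1 = Nat.card G :=
  Nat.card_congr
    { toFun := fun p => p.1.1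
      invFun := fun x => ⟨(x, x⁻¹), trivial, trivial, mul_inv_cancel x⟩
      left_inv := fun ⟨⟨a, b⟩, _, _, hab⟩ => by
        simp only [Subtype.mk.injEq, Prod.mk.injEq, true_and]
        exact inv_eq_of_mul_eq_one_right hab
      right_inv := fun _ => rfl }

lemma coeff_ind_mul_ind {G : Type*} [Group G] [Finite G] (X Y : Set G) (z : G) :
    (ind R X * ind R Y).coeff z = (structConst X Y z : R) := by
  classical
  rw [ind, ind, Finset.sum_mul_sum, ← Finset.sum_product']
  simp only [single_mul_single, coeff_sum, Finsupp.finsetSum_apply, coeff_single, Finsupp.single_apply, mul_one]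
  rw [Finset.sum_boole, structConst]
  congr 1
  change _ = Nat.card ({p : G × G | p.1 ∈ X ∧ p.2 ∈ Y ∧ p.1 * p.2 = z} : Set (G × G))
  rw [Nat.card_coe_set_eq, ← Set.ncard_coe_finset]
  congr 1
  ext ⟨a, b⟩
  simp [and_assoc]

variable {G G' : Type*} [Group G] [Finite G] [Group G'] [Finite G']

/-- The relation between elements of `R[G]` and `R[G']` induced by an algebraic isomorphism `φ`:
the coefficient of `f` at each point of a basic set `Z` equals the coefficient of `f'` at each point
of `φ Z`. In particular both are constant on basic sets. -/
def Match (A : SRing G) (φ : Set G → Set G') (f : MonoidAlgebra R G) (f' : MonoidAlgebra R G') :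
    Prop :=
  ∀ Z ∈ A.parts, ∀ z ∈ Z, ∀ z' ∈ φ Z, f.coeff z = f'.coeff z'

variable {A : SRing G} {B : SRing G'} {φ : Set G → Set G'}

/-- Distinct basic sets have disjoint images. -/
lemma IsAlgIso.eq_of_mem (h : IsAlgIso A B φ) {Y Z : Set G} (hY : Y ∈ A.parts) (hZ : Z ∈ A.parts)
    {z' : G'} (hzY : z' ∈ φ Y) (hzZ : z' ∈ φ Z) : Y = Z :=
  h.bijOn.injOn hY hZ (B.eq_of_mem _ (h.bijOn.mapsTo hY) _ (h.bijOn.mapsTo hZ) z' hzY hzZ)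

lemma IsAlgIso.exists_mem (h : IsAlgIso A B φ) (z' : G') : ∃ Z ∈ A.parts, z' ∈ φ Z := by
  obtain ⟨W, hW, hz⟩ := B.exists_mem z'
  obtain ⟨Z, hZ, rfl⟩ := h.bijOn.surjOn hW
  exact ⟨Z, hZ, hz⟩

lemma IsAlgIso.nonempty (h : IsAlgIso A B φ) {Z : Set G} (hZ : Z ∈ A.parts) : (φ Z).Nonempty :=
  B.nonempty_mem _ (h.bijOn.mapsTo hZ)

lemma Match.ind (h : IsAlgIso A B φ) {X : Set G} (hX : X ∈ A.parts) :
    Match A φ (ind R X) (ind R (φ X)) := by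
  intro Z hZ z hz z' hz'
  rw [coeff_ind, coeff_ind]
  have : z ∈ X ↔ z' ∈ φ X := by
    constructor
    · intro hx
      rwa [A.eq_of_mem X hX Z hZ z hx hz]
    · intro hx
      rwa [h.eq_of_mem hX hZ hx hz']
  classical exact if_congr this rfl rfl

/-- Matching elements have the same coordinates in the bases of basic sets. -/
lemma Match.exists_coeffs (h : IsAlgIso A B φ) {f : MonoidAlgebra R G} {f' : MonoidAlgebra R G'}
    (hf : Match A φ f f') : ∃ a : Set G → R,
      f = ∑ Y ∈ A.parts.toFinite.toFinset, a Y • SRingPaper.ind R Y ∧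
      f' = ∑ Y ∈ A.parts.toFinite.toFinset, a Y • SRingPaper.ind R (φ Y) := by
  classical
  have hrep : ∀ Y : Set G, ∃ r : R, Y ∈ A.parts →
      (∀ z ∈ Y, f.coeff z = r) ∧ ∀ z' ∈ φ Y, f'.coeff z' = r := by
    intro Y
    by_cases hY : Y ∈ A.parts
    · obtain ⟨y, hy⟩ := A.nonempty_mem Y hY
      obtain ⟨y', hy'⟩ := h.nonempty hY
      exact ⟨f.coeff y, fun _ => ⟨fun z hz => (hf Y hY z hz y' hy').trans (hf Y hY y hy y' hy').symm,
        fun z' hz' => (hf Y hY y hy z' hz').symm⟩⟩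
    · exact ⟨0, fun h => absurd h hY⟩
  choose a ha using hrep
  refine ⟨a, ?_, ?_⟩
  · ext z
    obtain ⟨Z, hZ, hz⟩ := A.exists_mem z
    rw [coeff_sum, Finsupp.finsetSum_apply, Finset.sum_eq_single Z]
    · simp [coeff_ind, hz, (ha Z hZ).1 z hz]
    · intro Y hY hne
      have : z ∉ Y := fun hzY => hne (A.eq_of_mem Y (by simpa using hY) Z hZ z hzY hz)
      simp [coeff_ind, this]
    · intro hn
      exact absurd (by simpa using hZ) hn
  · ext z
    obtain ⟨Z, hZ, hz⟩ := h.exists_mem z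
    rw [coeff_sum, Finsupp.finsetSum_apply, Finset.sum_eq_single Z]
    · simp [coeff_ind, hz, (ha Z hZ).2 z hz]
    · intro Y hY hne
      have : z ∉ φ Y := fun hzY => hne (h.eq_of_mem (by simpa using hY) hZ hzY hz)
      simp [coeff_ind, this]
    · intro hn
      exact absurd (by simpa using hZ) hn

lemma Match.mul (h : IsAlgIso A B φ) {f₁ f₂ : MonoidAlgebra R G} {f₁' f₂' : MonoidAlgebra R G'}
    (h₁ : Match A φ f₁ f₁') (h₂ : Match A φ f₂ f₂') : Match A φ (f₁ * f₂) (f₁' * f₂') := by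
  obtain ⟨a, rfl, rfl⟩ := h₁.exists_coeffs h
  obtain ⟨b, rfl, rfl⟩ := h₂.exists_coeffs h
  intro Z hZ z hz z' hz'
  simp only [Finset.sum_mul_sum, coeff_sum, Finsupp.finsetSum_apply, smul_mul_smul_comm,
    coeff_smul_apply, coeff_ind_mul_ind]
  refine Finset.sum_congr rfl fun X hX => Finset.sum_congr rfl fun Y hY => ?_
  rw [h.structConst_eq X (by simpa using hX) Y (by simpa using hY) Z hZ z hz z' hz']

lemma IsAlgIso.map_one (h : IsAlgIso A B φ) : φ {1} = {1} := by
  obtain ⟨X, hX, hX1⟩ := h.bijOn.surjOn B.one_mem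
  obtain ⟨e, he⟩ := h.nonempty A.one_mem
  -- Compare the constants of `{1} * X` and `φ {1} * {1}` on the basic sets `{1}` and `φ {1}`.
  have hc := h.structConst_eq {1} A.one_mem X hX {1} A.one_mem 1 rfl e he
  have hne : structConst (φ {1}) (φ X) e ≠ 0 := by
    rw [structConst, hX1]
    have : Nonempty {p : G' × G' // p.1 ∈ φ {1} ∧ p.2 ∈ ({1} : Set G') ∧ p.1 * p.2 = e} :=
      ⟨⟨(e, 1), he, rfl, mul_one e⟩⟩
    exact Nat.card_pos.ne'
  rw [← hc, structConst] at hne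
  obtain ⟨⟨⟨a, b⟩, ha, hb, hab⟩⟩ := (Nat.card_ne_zero.mp hne).1
  have hb1 : b = 1 := by
    have : a = 1 := ha
    simpa [this] using hab
  have : X = {1} := A.eq_of_mem X hX {1} A.one_mem 1 (hb1 ▸ hb) rfl
  rwa [this] at hX1

lemma Match.one (h : IsAlgIso A B φ) :
    Match A φ (1 : MonoidAlgebra R G) (1 : MonoidAlgebra R G') := by
  have := Match.ind (R := R) h A.one_mem
  rwa [h.map_one, ind_one, ind_one] at this

lemma Match.pow (h : IsAlgIso A B φ) {f : MonoidAlgebra R G} {f' : MonoidAlgebra R G'}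
    (hf : Match A φ f f') (n : ℕ) : Match A φ (f ^ n) (f' ^ n) := by
  induction n with
  | zero => simpa using Match.one h
  | succ n ih => rw [pow_succ, pow_succ]; exact ih.mul h hf

/-- The group order is the coefficient of `G̲ ^ 2` at `1`, hence is preserved. -/
lemma IsAlgIso.card_eq (h : IsAlgIso A B φ) : Nat.card G = Nat.card G' := by
  have hall : Match A φ (SRingPaper.ind ℤ (Set.univ : Set G))
      (SRingPaper.ind ℤ (Set.univ : Set G')) := by
    intro Z _ z _ z' _
    simp [coeff_ind]
  have h1 := (hall.mul h hall) {1} A.one_mem 1 rfl 1 (by rw [h.map_one]; rfl)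
  rw [coeff_ind_mul_ind, coeff_ind_mul_ind, Nat.cast_inj] at h1
  rwa [structConst_univ_one, structConst_univ_one] at h1

end Coefficients

open Classical in
/-- Frobenius: modulo `p`, the coefficient of `X̲ ^ (p ^ m)` at `z` counts the `x ∈ X` with
`x ^ (p ^ m) = z`. -/
lemma coeff_ind_pow {G : Type*} [CommGroup G] [Finite G] (p m : ℕ) [Fact p.Prime] (X : Set G)
    (z : G) : (ind (ZMod p) X ^ p ^ m).coeff z =
      ((X.toFinite.toFinset.filter fun x => x ^ p ^ m = z).card : ZMod p) := by
  have : CharP (MonoidAlgebra (ZMod p) G) p := charP_of_injective_algebraMap' (ZMod p) p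
  rw [ind, sum_pow_char_pow p m]
  simp only [single_pow, one_pow, coeff_sum, Finsupp.finsetSum_apply, coeff_single, Finsupp.single_apply]
  rw [Finset.sum_boole]

/-- If `X` is a basic set with fewer than `p` elements, containing an element of order
`p ^ (m + 1) = |G|`, then `G'` is cyclic. -/
lemma isCyclic_of_small_basic_set {G G' : Type*} [CommGroup G] [Finite G] [CommGroup G'] [Finite G']
    (p m : ℕ) [Fact p.Prime] (hcard : Nat.card G = p ^ (m + 1)) {A : SRing G} {B : SRing G'}
    {φ : Set G → Set G'} (h : IsAlgIso A B φ) {X : Set G} (hX : X ∈ A.parts)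
    (hXcard : Nat.card X < p) {g : G} (hg : g ∈ X) (hgq : g ^ p ^ m ≠ 1) : IsCyclic G' := by
  classical
  obtain ⟨Z, hZ, hgZ⟩ := A.exists_mem (g ^ p ^ m)
  obtain ⟨z', hz'⟩ := h.nonempty hZ
  have hz'1 : z' ≠ 1 := by
    rintro rfl
    have : Z = {1} := h.eq_of_mem hZ A.one_mem hz' (by rw [h.map_one]; rfl)
    exact hgq (by simpa [this] using hgZ)
  have hco := (Match.ind (R := ZMod p) h hX).pow h (p ^ m) Z hZ _ hgZ z' hz'
  rw [coeff_ind_pow, coeff_ind_pow] at hco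
  have hne : ((X.toFinite.toFinset.filter fun x => x ^ p ^ m = g ^ p ^ m).card : ZMod p) ≠ 0 := by
    rw [Ne, ZMod.natCast_eq_zero_iff]
    refine Nat.not_dvd_of_pos_of_lt (Finset.card_pos.mpr ⟨g, by simp [hg]⟩) ?_
    refine (Finset.card_filter_le _ _).trans_lt ?_
    rwa [← Set.ncard_eq_toFinset_card X, ← Nat.card_coe_set_eq]
  rw [hco] at hne
  have hpos : (φ X).toFinite.toFinset.filter (fun x => x ^ p ^ m = z') ≠ ∅ := by
    intro h0
    rw [h0] at hne
    simp at hne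
  obtain ⟨x', hx'⟩ := Finset.nonempty_iff_ne_empty.mpr hpos
  have hx'q : x' ^ p ^ m = z' := (Finset.mem_filter.mp hx').2
  have hcard' : Nat.card G' = p ^ (m + 1) := h.card_eq ▸ hcard
  refine isCyclic_of_orderOf_eq_card x' ?_
  rw [hcard']
  refine orderOf_eq_prime_pow (by rwa [hx'q]) ?_
  rw [← hcard']
  exact pow_card_eq_one'

end SRingPaper

open SRingPaper in
/-- if `A` is an S-ring over a cyclic group `G` of odd prime-power
order such that `|rad(A)| = 1`, `A` is normal, and `A = cyc(K, G)` for some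
`K ≤ K₀` with `K₀` the unique subgroup of `Aut(G)` of order `p - 1`, and `φ` is
an algebraic isomorphism from `A` to an S-ring `B` over a finite abelian group
`G'`, then `G'` is cyclic. -/
theorem target_of_alg_iso_is_cyclic
    (p : ℕ) (hp : p.Prime) (hodd : Odd p)
    (G : Type*) [Group G] [Finite G] (hcyc : IsCyclic G)
    (hcard : ∃ k : ℕ, 1 ≤ k ∧ Nat.card G = p ^ k)
    (A : SRing G)
    (hrad : ∀ X ∈ A.parts, IsHighest X → radSet X = {1})
    (hnorm : IsNormalSRing A)
    (hcycA : ∃ K₀ : Subgroup (MulAut G), Nat.card K₀ = p - 1 ∧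
      (∀ K₁ : Subgroup (MulAut G), Nat.card K₁ = p - 1 → K₁ = K₀) ∧
      ∃ K : Subgroup (MulAut G), K ≤ K₀ ∧ A.parts = cycParts K)
    (G' : Type*) [CommGroup G'] [Finite G'] (B : SRing G')
    (φ : Set G → Set G') (hφ : IsAlgIso A B φ) :
    IsCyclic G' := by
  obtain ⟨k, hk, hcard⟩ := hcard
  obtain ⟨m, rfl⟩ : ∃ m, k = m + 1 := ⟨k - 1, by omega⟩
  obtain ⟨K₀, hK₀, -, K, hKK₀, hparts⟩ := hcycA
  have : Fact p.Prime := ⟨hp⟩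
  obtain ⟨g, hg⟩ := hcyc.exists_generator
  let _ : CommGroup G := hcyc.commGroup
  have hX : {h : G | ∃ f ∈ K, f g = h} ∈ A.parts := by rw [hparts]; exact ⟨g, rfl⟩
  have hXcard : Nat.card {h : G | ∃ f ∈ K, f g = h} < p := by
    have hle : Nat.card {h : G | ∃ f ∈ K, f g = h} ≤ Nat.card K :=
      Nat.card_le_card_of_surjective
        (fun f : K => (⟨f.1 g, f.1, f.2, rfl⟩ : {h : G | ∃ f ∈ K, f g = h}))
        (by rintro ⟨_, f, hf, rfl⟩; exact ⟨⟨f, hf⟩, rfl⟩)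
    have hle' : Nat.card K ≤ Nat.card K₀ := Subgroup.card_le_of_le hKK₀
    have := hp.pos
    omega
  have hgq : g ^ p ^ m ≠ 1 := by
    intro h1
    have ho : orderOf g = p ^ (m + 1) := by
      rw [← hcard]
      exact orderOf_eq_card_of_forall_mem_zpowers hg
    have hd := Nat.le_of_dvd (pow_pos hp.pos m) (orderOf_dvd_of_pow_eq_one h1)
    rw [ho] at hd
    exact absurd hd (not_le.mpr (Nat.pow_lt_pow_right hp.one_lt (Nat.lt_succ_self m)))
  exact isCyclic_of_small_basic_set p m hcard hφ hX hXcard ⟨1, K.one_mem, rfl⟩ hgq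
end
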